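/- arXiv:2007.07727 — 3 statements merged into one kernel-verified Lean document; each statement's English description precedes it below -/
import Mathlib

section
/- Let ψ : ℝ → ℂ be a 2π-periodic function satisfying the Lipschitz condition |ψ(u) − ψ(v)| ≤ C|u − v| for all u, v ∈ [−π, π] (for some absolute constant C > 0), let φ(u) = ψ(u) sinh(u), and let f(x) = (2x/π) ∫_{−π}^{π} K₀(x cosh u) φ(u) cosh(u) du for x > 0. For n ∈ ℕ define aₙ = ∫₀^∞ Lₙ(y) f(y) dy, where Lₙ(y) = ∫₀^y K_{in}(t)/(y² − t²)^{1/2} dt is the Lebedev kernel (π/(2 cosh(πn/2))) K_{in/2}(y)[I_{in/2}(y) + I_{−in/2}(y)]. Then for every x > 0 one has f(x) = (1/π³) Σ_{n=1}^∞ sinh(πn) Φₙ(x) aₙ, where Φₙ(x) = x ∫_{−π}^{π} K₀(x cosh u) sinh(2u) sin(nu) du. -/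
/-!
The series is Parseval's identity in disguise: `aₙ` is `π / sinh (πn)` times the sine coefficient
of `ψ`, and `Φₙ(x)` is `x` times the sine coefficient of the odd function
`u ↦ K₀(x cosh u) sinh 2u`. The coefficients `aₙ` come from two integrals.

* For `c, t > 0`, `∫_{y > t} y K₀(cy) / √(y² - t²) dy = (π / 2c) e^{-ct}`. Indeed `2 K₀(cs)` is the
  integral of the Yukawa potential `e^{-cR} / R` along a line at distance `s` from its centre, so
  after `y = √(t² + r²)` the left-hand side is a quarter of the integral of the potential over a
  plane at distance `t`, which is elementary in polar coordinates. As `Lₙ` is the Abel transform of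
  `K_{in}`, Fubini gives `∫₀^∞ Lₙ(y) y K₀(cy) dy = (π / 2c) ∫₀^∞ K_{in}(t) e^{-ct} dt
  = (π / 2c) ∫₀^∞ cos (nw) / (c + cosh w) dw`.
* For `c = cosh u`, `sinh u ∫₀^∞ cos (τw) / (cosh u + cosh w) dw = π sin (τu) / sinh (πτ)`. With
  the logistic function `σ`, `sinh u / (cosh u + cosh w) = ∫_{-u}^{u} σ'(w - s) ds`, and the Fourier
  transform of `σ' = σ (1 - σ)` is the Beta integral `B(1 + iτ, 1 - iτ) = πτ / sinh (πτ)`.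
-/

open MeasureTheory Real

/-- The modified Bessel function of the second kind of purely imaginary order `iτ`,
`K_{iτ}(x) = ∫₀^∞ e^{−x cosh u} cos(τu) du` (real-valued). -/
noncomputable def besselKi (τ x : ℝ) : ℝ :=
  ∫ u in Set.Ioi (0 : ℝ), Real.exp (-x * Real.cosh u) * Real.cos (τ * u)

/-- The Lebedev kernel `Lₙ(y) = ∫₀^y K_{in}(t)/(y² − t²)^{1/2} dt`, which equals
`(π/(2 cosh(πn/2))) K_{in/2}(y)[I_{in/2}(y) + I_{−in/2}(y)]`. -/
noncomputable def lebedevL (n : ℕ) (y : ℝ) : ℝ :=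
  ∫ t in (0 : ℝ)..y, besselKi n t / Real.sqrt (y ^ 2 - t ^ 2)

/-- The kernel `Φₙ(x) = x ∫_{−π}^{π} K₀(x cosh u) sinh(2u) sin(nu) du`. -/
noncomputable def PhiKer (n : ℕ) (x : ℝ) : ℝ :=
  x * ∫ u in (-π)..π, besselKi 0 (x * Real.cosh u) * Real.sinh (2 * u) * Real.sin (n * u)

section SineParseval

open Set
open scoped ComplexConjugate

theorem conj_fourierCoeffOn_conj {a b : ℝ} (hab : a < b) (f : ℝ → ℂ) (n : ℤ) :
    conj (fourierCoeffOn hab (fun x ↦ conj (f x)) n) = fourierCoeffOn hab f (-n) := by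
  simp only [fourierCoeffOn_eq_integral, intervalIntegral.integral_of_le hab.le, Complex.real_smul,
    smul_eq_mul, map_mul, Complex.conj_ofReal, ← integral_conj, Complex.conj_conj, ← fourier_neg]

theorem hasSum_conj_fourierCoeffOn_mul {a b : ℝ} (hab : a < b) {f g : ℝ → ℂ}
    (hf : MemLp f 2 (volume.restrict (Ioc a b))) (hg : MemLp g 2 (volume.restrict (Ioc a b))) :
    HasSum (fun n ↦ conj (fourierCoeffOn hab f n) * fourierCoeffOn hab g n)
      ((b - a)⁻¹ • ∫ x in a..b, conj (f x) * g x) := by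
  have := Fact.mk (sub_pos.2 hab)
  rw [← add_sub_cancel a b] at hf hg
  have hF := hf.memLp_liftIoc.haarAddCircle
  have hG := hg.memLp_liftIoc.haarAddCircle
  convert! fourierBasis.hasSum_inner_mul_inner hF.toLp hG.toLp using 1
  · ext n
    rw [← inner_conj_symm, ← HilbertBasis.repr_apply_apply, ← HilbertBasis.repr_apply_apply,
      fourierBasis_repr, fourierBasis_repr, fourierCoeff_congr_ae hF.coeFn_toLp,
      fourierCoeff_congr_ae hG.coeFn_toLp, fourierCoeff_liftIoc_eq, fourierCoeff_liftIoc_eq]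
    simp only [add_sub_cancel]
  · rw [L2.inner_def]
    nth_rw 2 [← add_sub_cancel a b]
    rw [← AddCircle.integral_liftIoc_eq_intervalIntegral, ← AddCircle.integral_haarAddCircle]
    refine integral_congr_ae ?_
    filter_upwards [hF.coeFn_toLp, hG.coeFn_toLp] with x hFx hGx
    rw [hFx, hGx, RCLike.inner_apply, mul_comm]
    rfl

theorem hasSum_fourierCoeffOn_neg_mul {a b : ℝ} (hab : a < b) {f g : ℝ → ℂ}
    (hf : MemLp f 2 (volume.restrict (Ioc a b))) (hg : MemLp g 2 (volume.restrict (Ioc a b))) :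
    HasSum (fun n ↦ fourierCoeffOn hab f (-n) * fourierCoeffOn hab g n)
      ((b - a)⁻¹ • ∫ x in a..b, f x * g x) := by
  have hconj : MemLp (fun x ↦ conj (f x)) 2 (volume.restrict (Ioc a b)) := hf.star
  simpa only [conj_fourierCoeffOn_conj, Complex.conj_conj] using
    hasSum_conj_fourierCoeffOn_mul hab hconj hg

theorem fourierCoeffOn_neg_of_odd {T : ℝ} (hT : 0 < T) {g : ℝ → ℂ} (hg : ∀ u, g (-u) = -g u)
    (n : ℤ) : fourierCoeffOn (neg_lt_self hT) g (-n) = -fourierCoeffOn (neg_lt_self hT) g n := by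
  have hreflect := intervalIntegral.integral_comp_neg (a := -T) (b := T)
    fun u ↦ fourier (-(-n)) (u : AddCircle (T - -T)) • g u
  rw [neg_neg T] at hreflect
  rw [fourierCoeffOn_eq_integral, fourierCoeffOn_eq_integral, ← hreflect, ← smul_neg,
    ← intervalIntegral.integral_neg]
  simp only [hg, smul_neg, fourier_coe_apply, Complex.ofReal_neg, Int.cast_neg]
  ring_nf

theorem integral_mul_sin_eq_fourierCoeffOn {h : ℝ → ℂ}
    (hh : IntervalIntegrable h volume (-π) π) (n : ℤ) :
    ∫ u in (-π)..π, h u * Real.sin (n * u) = π * Complex.I *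
      (fourierCoeffOn (neg_lt_self pi_pos) h n - fourierCoeffOn (neg_lt_self pi_pos) h (-n)) := by
  have hint (m : ℤ) : IntervalIntegrable
      (fun u ↦ fourier m (u : AddCircle (π - -π)) • h u) volume (-π) π :=
    hh.continuousOn_smul (by fun_prop)
  rw [fourierCoeffOn_eq_integral, fourierCoeffOn_eq_integral, ← smul_sub,
    ← intervalIntegral.integral_sub (hint _) (hint _), ← intervalIntegral.integral_smul,
    ← intervalIntegral.integral_const_mul]
  refine intervalIntegral.integral_congr fun u _ ↦ ?_
  have hexp (m : ℤ) : fourier m (u : AddCircle (π - -π)) = Complex.exp (m * u * Complex.I) := by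
    rw [fourier_coe_apply]
    congr 1
    push_cast
    field_simp
    ring
  simp only [hexp, Complex.ofReal_sin, Complex.ofReal_mul, Complex.ofReal_intCast, Complex.sin,
    Complex.real_smul, smul_eq_mul]
  push_cast
  field_simp
  ring_nf

theorem hasSum_integral_mul_sin {g h : ℝ → ℂ} (hodd : ∀ u, g (-u) = -g u)
    (hg : MemLp g 2 (volume.restrict (Ioc (-π) π)))
    (hh : MemLp h 2 (volume.restrict (Ioc (-π) π))) :
    HasSum (fun n : ℕ ↦ (∫ u in (-π)..π, g u * Real.sin ((n + 1 : ℕ) * u)) *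
        ∫ u in (-π)..π, h u * Real.sin ((n + 1 : ℕ) * u))
      (π * ∫ u in (-π)..π, g u * h u) := by
  have hπ : -π < π := neg_lt_self pi_pos
  have intervalIntegrable {F : ℝ → ℂ} (hF : MemLp F 2 (volume.restrict (Ioc (-π) π))) :
      IntervalIntegrable F volume (-π) π :=
    (intervalIntegrable_iff_integrableOn_Ioc_of_le hπ.le).2 (hF.integrable one_le_two)
  have hzero : fourierCoeffOn hπ g 0 = 0 :=
    self_eq_neg.1 (by simpa using fourierCoeffOn_neg_of_odd pi_pos hodd 0)
  have hpair := (hasSum_nat_add_iff' 1).2 (hasSum_fourierCoeffOn_neg_mul hπ hg hh).nat_add_neg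
  convert! hpair.mul_left (2 * (π : ℂ) ^ 2) using 1
  · ext n
    have hgn := integral_mul_sin_eq_fourierCoeffOn (intervalIntegrable hg) (n + 1 : ℕ)
    have hhn := integral_mul_sin_eq_fourierCoeffOn (intervalIntegrable hh) (n + 1 : ℕ)
    rw [Int.cast_natCast] at hgn hhn
    rw [hgn, hhn, neg_neg, fourierCoeffOn_neg_of_odd pi_pos hodd]
    linear_combination (2 * π ^ 2 * fourierCoeffOn hπ g (n + 1 : ℕ) *
      (fourierCoeffOn hπ h (n + 1 : ℕ) - fourierCoeffOn hπ h (-(n + 1 : ℕ)))) * Complex.I_sq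
  · simp [hzero]
    field_simp
    ring

end SineParseval

section LogisticFourier

open Set
open scoped Interval

/-- The integrand is the pullback of `1` on `(0, 1)` along the logistic function. -/
theorem integrable_sigmoid_mul_one_sub_sigmoid :
    Integrable fun w : ℝ ↦ sigmoid w * (1 - sigmoid w) := by
  have hpull := integrableOn_image_iff_integrableOn_abs_deriv_smul MeasurableSet.univ
    (fun w _ ↦ (hasDerivAt_sigmoid w).hasDerivWithinAt) sigmoid_injective.injOn fun _ ↦ (1 : ℝ)
  rw [image_univ, range_sigmoid, integrableOn_univ] at hpull
  refine (hpull.1 (integrableOn_const (by simp))).congr (.of_forall fun w ↦ ?_)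
  simp only [smul_eq_mul, mul_one]
  exact abs_of_pos (mul_pos (sigmoid_pos w) (sub_pos.2 (sigmoid_lt_one w)))

theorem betaIntegral_eq_integral_sigmoid (p q : ℂ) :
    Complex.betaIntegral p q = ∫ w : ℝ, (sigmoid w : ℂ) ^ p * (1 - sigmoid w : ℂ) ^ q := by
  have hpull := integral_image_eq_integral_abs_deriv_smul MeasurableSet.univ
    (fun w _ ↦ (hasDerivAt_sigmoid w).hasDerivWithinAt) sigmoid_injective.injOn
    fun s : ℝ ↦ (s : ℂ) ^ (p - 1) * (1 - s : ℂ) ^ (q - 1)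
  rw [image_univ, range_sigmoid, Measure.restrict_univ, ← integral_Ioc_eq_integral_Ioo,
    ← intervalIntegral.integral_of_le zero_le_one] at hpull
  rw [Complex.betaIntegral, hpull]
  congr with w
  have hpos : 0 < sigmoid w := sigmoid_pos w
  have hpos' : 0 < 1 - sigmoid w := sub_pos.2 (sigmoid_lt_one w)
  have hne : (sigmoid w : ℂ) ≠ 0 := mod_cast hpos.ne'
  have hne' : (1 - sigmoid w : ℂ) ≠ 0 := mod_cast hpos'.ne'
  rw [abs_of_pos (mul_pos hpos hpos'), Complex.real_smul, Complex.cpow_sub _ _ hne,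
    Complex.cpow_sub _ _ hne', Complex.cpow_one, Complex.cpow_one]
  push_cast
  field_simp

theorem log_sigmoid_sub_log_one_sub_sigmoid (w : ℝ) :
    Real.log (sigmoid w) - Real.log (1 - sigmoid w) = w := by
  rw [← sigmoid_neg, ← sigmoid_mul_rexp_neg, Real.log_mul (sigmoid_pos w).ne' (exp_ne_zero _),
    log_exp]
  ring

theorem sigmoid_cpow_one_add_mul_cpow_one_sub (z : ℂ) (w : ℝ) :
    (sigmoid w : ℂ) ^ (1 + z) * (1 - sigmoid w : ℂ) ^ (1 - z) =
      (sigmoid w * (1 - sigmoid w) : ℝ) * Complex.exp (z * w) := by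
  have hpos' : 0 < 1 - sigmoid w := sub_pos.2 (sigmoid_lt_one w)
  have hne : (sigmoid w : ℂ) ≠ 0 := mod_cast (sigmoid_pos w).ne'
  have hne' : (1 - sigmoid w : ℂ) ≠ 0 := mod_cast hpos'.ne'
  have hexp : Complex.exp (z * w) = (sigmoid w : ℂ) ^ z / (1 - sigmoid w : ℂ) ^ z := by
    rw [Complex.cpow_def_of_ne_zero hne, Complex.cpow_def_of_ne_zero hne', ← Complex.exp_sub,
      ← sub_mul, ← Complex.ofReal_log (sigmoid_nonneg w), ← Complex.ofReal_one,
      ← Complex.ofReal_sub, ← Complex.ofReal_log hpos'.le, ← Complex.ofReal_sub,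
      log_sigmoid_sub_log_one_sub_sigmoid, mul_comm]
  rw [Complex.cpow_add _ _ hne, Complex.cpow_sub _ _ hne', Complex.cpow_one, Complex.cpow_one,
    hexp]
  push_cast
  ring

theorem gamma_one_add_mul_gamma_one_sub {z : ℂ} (hz : z ≠ 0) :
    Complex.Gamma (1 + z) * Complex.Gamma (1 - z) = π * z / Complex.sin (π * z) := by
  rw [add_comm, Complex.Gamma_add_one z hz, mul_assoc, Complex.Gamma_mul_Gamma_one_sub]
  ring

/-- The substitution `s = σ(w)`, for which `e^w = s / (1 - s)`, turns the left-hand side into the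
Beta integral `B(1 + z, 1 - z)`. -/
theorem integral_sigmoid_mul_one_sub_sigmoid_mul_cexp {z : ℂ} (hz : z ≠ 0) (hre : |z.re| < 1) :
    ∫ w : ℝ, ((sigmoid w * (1 - sigmoid w) : ℝ) : ℂ) * Complex.exp (z * w) =
      π * z / Complex.sin (π * z) := by
  obtain ⟨hlower, hupper⟩ := abs_lt.1 hre
  have hbeta := Complex.Gamma_mul_Gamma_eq_betaIntegral (s := 1 + z) (t := 1 - z)
    (by rw [Complex.add_re, Complex.one_re]; linarith)
    (by rw [Complex.sub_re, Complex.one_re]; linarith)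
  rw [show 1 + z + (1 - z) = (1 : ℂ) + 1 by ring, Complex.Gamma_add_one 1 one_ne_zero,
    Complex.Gamma_one, one_mul, one_mul, gamma_one_add_mul_gamma_one_sub hz,
    betaIntegral_eq_integral_sigmoid] at hbeta
  simpa only [sigmoid_cpow_one_add_mul_cpow_one_sub] using hbeta.symm

theorem integrable_uncurry_comp_sub {g : ℝ → ℂ} (hg : Integrable g) (a b : ℝ) :
    Integrable (Function.uncurry fun s w : ℝ ↦ g (w - s))
      ((volume.restrict (Ι a b)).prod volume) := by
  have hone : IntegrableOn (fun _ : ℝ ↦ (1 : ℂ)) (Ι a b) := integrableOn_const (by simp [uIoc])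
  simpa [Function.comp_def, Function.uncurry_def] using
    (hone.convolution_integrand (.mul ℂ ℂ) hg).swap

theorem integrable_intervalIntegral_sub {g : ℝ → ℂ} (hg : Integrable g) (a b : ℝ) :
    Integrable fun w : ℝ ↦ ∫ s in a..b, g (w - s) := by
  simp only [intervalIntegral.intervalIntegral_eq_integral_uIoc]
  exact (integrable_uncurry_comp_sub hg a b).integral_prod_right.smul _

theorem integral_intervalIntegral_sub_mul_cexp {g : ℝ → ℂ} (hg : Integrable g) (a b τ : ℝ) :
    ∫ w : ℝ, (∫ s in a..b, g (w - s)) * Complex.exp ((τ * w : ℝ) * Complex.I) =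
      (∫ s in a..b, Complex.exp ((τ * s : ℝ) * Complex.I)) *
        ∫ w : ℝ, g w * Complex.exp ((τ * w : ℝ) * Complex.I) := by
  have hprod : Integrable (Function.uncurry fun s w : ℝ ↦
      g (w - s) * Complex.exp ((τ * w : ℝ) * Complex.I))
      ((volume.restrict (Ι a b)).prod volume) :=
    (integrable_uncurry_comp_sub hg a b).mul_bdd (c := 1) (by fun_prop)
      (.of_forall fun p ↦ (Complex.norm_exp_ofReal_mul_I _).le)
  simp only [← intervalIntegral.integral_mul_const]
  rw [← intervalIntegral_integral_swap hprod]
  refine intervalIntegral.integral_congr fun s _ ↦ ?_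
  calc ∫ w : ℝ, g (w - s) * Complex.exp ((τ * w : ℝ) * Complex.I)
    _ = ∫ w : ℝ, g w * Complex.exp ((τ * (w + s) : ℝ) * Complex.I) := by
      simpa using integral_sub_right_eq_self
        (fun w : ℝ ↦ g w * Complex.exp ((τ * (w + s) : ℝ) * Complex.I)) s
    _ = ∫ w : ℝ, Complex.exp ((τ * s : ℝ) * Complex.I) *
          (g w * Complex.exp ((τ * w : ℝ) * Complex.I)) := by
      congr with w
      rw [mul_left_comm, ← Complex.exp_add]
      push_cast
      ring_nf
    _ = _ := integral_const_mul _ _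

theorem integral_cexp_mul_I {τ : ℝ} (hτ : τ ≠ 0) (u : ℝ) :
    ∫ s in (-u)..u, Complex.exp ((τ * s : ℝ) * Complex.I) = (2 * Real.sin (τ * u) / τ : ℝ) := by
  have hτI : (τ : ℂ) * Complex.I ≠ 0 := by simp [hτ]
  simp only [Complex.ofReal_mul, mul_right_comm (τ : ℂ)]
  rw [integral_exp_mul_complex hτI]
  push_cast
  rw [mul_neg, mul_right_comm, ← neg_mul, Complex.exp_mul_I, Complex.exp_mul_I, Complex.cos_neg,
    Complex.sin_neg]
  field_simp
  ring

theorem sinh_div_cosh_add_cosh_eq_integral (u w : ℝ) :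
    Real.sinh u / (Real.cosh u + Real.cosh w) =
      ∫ s in (-u)..u, sigmoid (w - s) * (1 - sigmoid (w - s)) := by
  have hderiv (s : ℝ) : HasDerivAt (fun s ↦ -sigmoid (w - s))
      (sigmoid (w - s) * (1 - sigmoid (w - s))) s := by
    simpa only [neg_neg] using ((hasDerivAt_sigmoid (w - s)).comp_const_sub w s).fun_neg
  rw [intervalIntegral.integral_eq_sub_of_hasDerivAt (fun s _ ↦ hderiv s)
    (Continuous.intervalIntegrable (by fun_prop) _ _)]
  simp only [sigmoid_def, Real.sinh_eq, Real.cosh_eq, neg_sub, Real.exp_sub, Real.exp_neg]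
  field_simp
  ring

theorem integrable_sinh_div_cosh_add_cosh (u : ℝ) :
    Integrable fun w : ℝ ↦ ((Real.sinh u / (Real.cosh u + Real.cosh w) : ℝ) : ℂ) := by
  simp only [sinh_div_cosh_add_cosh_eq_integral, ← intervalIntegral.integral_ofReal]
  exact integrable_intervalIntegral_sub
    (integrable_sigmoid_mul_one_sub_sigmoid.ofReal (𝕜 := ℂ)) (-u) u

theorem integral_sinh_div_cosh_add_cosh_mul_cexp {τ : ℝ} (hτ : τ ≠ 0) (u : ℝ) :
    ∫ w : ℝ, ((Real.sinh u / (Real.cosh u + Real.cosh w) : ℝ) : ℂ) *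
        Complex.exp ((τ * w : ℝ) * Complex.I) =
      (2 * π * Real.sin (τ * u) / Real.sinh (π * τ) : ℝ) := by
  have hlogistic := integral_sigmoid_mul_one_sub_sigmoid_mul_cexp (z := τ * Complex.I)
    (by simp [hτ]) (by simp)
  have hconv := integral_intervalIntegral_sub_mul_cexp
    (integrable_sigmoid_mul_one_sub_sigmoid.ofReal (𝕜 := ℂ)) (-u) u τ
  have hτ' : (τ : ℂ) ≠ 0 := mod_cast hτ
  have hexp (w : ℝ) : Complex.exp (τ * Complex.I * w) = Complex.exp ((τ * w : ℝ) * Complex.I) := by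
    rw [Complex.ofReal_mul, mul_right_comm]
  simp only [hexp, ← mul_assoc, Complex.sin_mul_I] at hlogistic
  simp only [sinh_div_cosh_add_cosh_eq_integral, ← intervalIntegral.integral_ofReal]
  refine hconv.trans ?_
  rw [integral_cexp_mul_I hτ, RCLike.ofReal_eq_complex_ofReal, hlogistic]
  push_cast
  field_simp

theorem integral_cos_div_cosh_add_cosh {τ : ℝ} (hτ : τ ≠ 0) (u : ℝ) :
    Real.sinh u * ∫ w in Ioi (0 : ℝ), Real.cos (τ * w) / (Real.cosh u + Real.cosh w) =
      π * Real.sin (τ * u) / Real.sinh (π * τ) := by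
  have hint : Integrable fun w : ℝ ↦ ((Real.sinh u / (Real.cosh u + Real.cosh w) : ℝ) : ℂ) *
      Complex.exp ((τ * w : ℝ) * Complex.I) :=
    (integrable_sinh_div_cosh_add_cosh u).mul_bdd (c := 1) (by fun_prop)
      (.of_forall fun w ↦ (Complex.norm_exp_ofReal_mul_I _).le)
  have hre := congrArg Complex.re (integral_sinh_div_cosh_add_cosh_mul_cexp hτ u)
  rw [Complex.ofReal_re, ← RCLike.re_to_complex, ← integral_re hint] at hre
  simp only [RCLike.re_to_complex, Complex.re_ofReal_mul, Complex.exp_ofReal_mul_I_re] at hre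
  have heven := integral_comp_abs
    (f := fun w ↦ Real.sinh u / (Real.cosh u + Real.cosh w) * Real.cos (τ * w))
  have hcos (w : ℝ) : Real.cos (τ * |w|) = Real.cos (τ * w) := by
    rw [← Real.cos_abs, abs_mul, abs_abs, ← abs_mul, Real.cos_abs]
  simp only [Real.cosh_abs, hcos, hre] at heven
  rw [← integral_const_mul]
  simp only [div_mul_eq_mul_div, mul_div_assoc] at heven ⊢
  linarith

end LogisticFourier

section BesselLaplace

open Set

theorem integrableOn_exp_neg_mul_cosh {x : ℝ} (hx : 0 < x) :
    IntegrableOn (fun u ↦ Real.exp (-x * Real.cosh u)) (Ioi 0) := by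
  refine (integrableOn_exp_mul_Ioi (neg_neg_of_pos hx) 0).mono' (by fun_prop) ?_
  filter_upwards [ae_restrict_mem measurableSet_Ioi] with u hu
  have hcosh : u ≤ Real.cosh u := (self_le_sinh_iff.2 (le_of_lt hu)).trans (sinh_lt_cosh u).le
  rw [norm_eq_abs, abs_exp, exp_le_exp]
  exact mul_le_mul_of_nonpos_left hcosh (neg_nonpos.2 hx.le)

theorem besselKi_zero_eq (x : ℝ) :
    besselKi 0 x = ∫ u in Ioi (0 : ℝ), Real.exp (-x * Real.cosh u) := by
  simp [besselKi]

theorem besselKi_zero_nonneg (x : ℝ) : 0 ≤ besselKi 0 x := by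
  rw [besselKi_zero_eq]
  exact integral_nonneg fun u ↦ (exp_pos _).le

theorem antitoneOn_besselKi_zero : AntitoneOn (besselKi 0) (Ioi 0) := by
  intro x hx y hy hxy
  rw [besselKi_zero_eq, besselKi_zero_eq]
  refine integral_mono (integrableOn_exp_neg_mul_cosh hy) (integrableOn_exp_neg_mul_cosh hx)
    fun u ↦ exp_le_exp.2 ?_
  exact mul_le_mul_of_nonneg_right (neg_le_neg hxy) (cosh_pos u).le

theorem measurable_besselKi (τ : ℝ) : Measurable (besselKi τ) := by
  have hkernel : StronglyMeasurable (Function.uncurry fun x u : ℝ ↦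
      Real.exp (-x * Real.cosh u) * Real.cos (τ * u)) :=
    Continuous.stronglyMeasurable (by fun_prop)
  exact hkernel.integral_prod_right.measurable

theorem integrableOn_inv_add_cosh {c : ℝ} (hc : -1 < c) :
    IntegrableOn (fun w ↦ (c + Real.cosh w)⁻¹) (Ioi 0) := by
  have hpos (w : ℝ) : 0 < c + Real.cosh w := by linarith [one_le_cosh w]
  have hmin : 0 < min 1 (1 + c) := lt_min one_pos (by linarith)
  have hmajorant := (integrableOn_exp_neg_Ioi 0).const_mul (2 / min 1 (1 + c))
  refine hmajorant.mono' (Continuous.aestronglyMeasurable ?_) (.of_forall fun w ↦ ?_)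
  · exact Continuous.inv₀ (by fun_prop) fun w ↦ (hpos w).ne'
  · have hcosh : min 1 (1 + c) * Real.cosh w ≤ c + Real.cosh w := by
      rcases min_cases 1 (1 + c) with ⟨h, hle⟩ | ⟨h, hlt⟩ <;> rw [h]
      · linarith
      · nlinarith [one_le_cosh w]
    have hexp : Real.exp w / 2 ≤ Real.cosh w := by
      rw [Real.cosh_eq]
      linarith [exp_pos (-w)]
    calc ‖(c + Real.cosh w)⁻¹‖
      _ = (c + Real.cosh w)⁻¹ := norm_of_nonneg (inv_nonneg.2 (hpos w).le)
      _ ≤ (min 1 (1 + c) * (Real.exp w / 2))⁻¹ := by gcongr; exact le_trans (by gcongr) hcosh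
      _ = 2 / min 1 (1 + c) * Real.exp (-w) := by rw [exp_neg]; field_simp

theorem integrable_exp_mul_cos_prod (τ : ℝ) {c : ℝ} (hc : -1 < c) :
    Integrable (Function.uncurry fun t w : ℝ ↦
        Real.exp (-t * Real.cosh w) * Real.cos (τ * w) * Real.exp (-c * t))
      ((volume.restrict (Ioi 0)).prod (volume.restrict (Ioi 0))) := by
  have hpos (w : ℝ) : 0 < c + Real.cosh w := by linarith [one_le_cosh w]
  have hexp : Integrable (Function.uncurry fun t w : ℝ ↦ Real.exp (-(c + Real.cosh w) * t))
      ((volume.restrict (Ioi 0)).prod (volume.restrict (Ioi 0))) := by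
    refine (integrable_prod_iff' (Continuous.aestronglyMeasurable (by fun_prop))).2 ⟨?_, ?_⟩
    · exact .of_forall fun w ↦ integrableOn_exp_mul_Ioi (neg_neg_of_pos (hpos w)) 0
    · refine (integrableOn_inv_add_cosh hc).congr (.of_forall fun w ↦ ?_)
      simp only [Function.uncurry_apply_pair, norm_eq_abs, abs_exp]
      rw [integral_exp_mul_Ioi (neg_neg_of_pos (hpos w)), mul_zero, exp_zero, neg_div_neg_eq,
        one_div]
  refine (hexp.mul_bdd (c := 1) (g := fun p : ℝ × ℝ ↦ Real.cos (τ * p.2)) (by fun_prop)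
    (.of_forall fun p ↦ abs_cos_le_one _)).congr (.of_forall fun p ↦ ?_)
  simp only [Function.uncurry_def]
  rw [mul_right_comm, ← exp_add]
  ring_nf

theorem integrableOn_besselKi_mul_exp (τ : ℝ) {c : ℝ} (hc : -1 < c) :
    IntegrableOn (fun t ↦ besselKi τ t * Real.exp (-c * t)) (Ioi 0) := by
  refine (integrable_exp_mul_cos_prod τ hc).integral_prod_left.congr (.of_forall fun t ↦ ?_)
  simp only [Function.uncurry_apply_pair, integral_mul_const, besselKi]

theorem integral_besselKi_mul_exp (τ : ℝ) {c : ℝ} (hc : -1 < c) :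
    ∫ t in Ioi (0 : ℝ), besselKi τ t * Real.exp (-c * t) =
      ∫ w in Ioi (0 : ℝ), Real.cos (τ * w) / (c + Real.cosh w) := by
  simp only [besselKi, ← integral_mul_const]
  rw [integral_integral_swap (integrable_exp_mul_cos_prod τ hc)]
  congr with w
  calc ∫ t in Ioi (0 : ℝ), Real.exp (-t * Real.cosh w) * Real.cos (τ * w) * Real.exp (-c * t)
    _ = Real.cos (τ * w) * ∫ t in Ioi (0 : ℝ), Real.exp (-(c + Real.cosh w) * t) := by
      rw [← integral_const_mul]
      congr with t
      rw [mul_right_comm, ← exp_add]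
      ring_nf
    _ = Real.cos (τ * w) / (c + Real.cosh w) := by
      rw [integral_exp_mul_Ioi (by linarith [one_le_cosh w]), mul_zero, exp_zero, neg_div_neg_eq,
        mul_one_div]

end BesselLaplace

section Yukawa

open Set

theorem integrable_comp_sqrt_sq_add_sq {f : ℝ → ℝ}
    (hf : IntegrableOn (fun ρ ↦ ρ * f ρ) (Ioi 0)) :
    Integrable fun p : ℝ × ℝ ↦ f (√(p.1 ^ 2 + p.2 ^ 2)) := by
  have hradial : Integrable fun z : ℂ ↦ f ‖z‖ :=
    (integrable_fun_norm_addHaar volume).2 (by simpa using hf)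
  rw [← Complex.volume_preserving_equiv_real_prod.integrable_comp_emb
    Complex.measurableEquivRealProd.measurableEmbedding]
  simpa [Function.comp_def, Complex.norm_eq_sqrt_sq_add_sq] using hradial

theorem integral_comp_sqrt_sq_add_sq (f : ℝ → ℝ) :
    ∫ p : ℝ × ℝ, f (√(p.1 ^ 2 + p.2 ^ 2)) = 2 * π * ∫ ρ in Ioi (0 : ℝ), ρ * f ρ := by
  rw [← Complex.volume_preserving_equiv_real_prod.integral_comp
    Complex.measurableEquivRealProd.measurableEmbedding]
  have hradial := integral_fun_norm_addHaar (volume : Measure ℂ) f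
  simpa [Complex.norm_eq_sqrt_sq_add_sq, Measure.real, Complex.volume_ball, mul_assoc]
    using hradial

/-- The Yukawa (screened Coulomb) potential `e^{-cR} / R` at distance `R`: its integrals along a
line and over a plane compute the Abel integral of `K₀`. -/
noncomputable def yukawa (c R : ℝ) : ℝ := Real.exp (-c * R) / R

theorem yukawa_nonneg (c : ℝ) {R : ℝ} (hR : 0 ≤ R) : 0 ≤ yukawa c R :=
  div_nonneg (exp_pos _).le hR

/-- Parametrise the line by `z = s sinh u`. -/
theorem integral_yukawa_line (c : ℝ) {s : ℝ} (hs : 0 < s) :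
    ∫ z : ℝ, yukawa c (√(s ^ 2 + z ^ 2)) = 2 * besselKi 0 (s * c) := by
  have himage : (fun u ↦ s * Real.sinh u) '' univ = univ := by
    rw [image_univ, range_eq_univ]
    exact (mul_left_surjective₀ hs.ne').comp sinh_surjective
  have hcov := integral_image_eq_integral_abs_deriv_smul MeasurableSet.univ
    (fun u _ ↦ ((hasDerivAt_sinh u).const_mul s).hasDerivWithinAt)
    ((mul_right_injective₀ hs.ne').comp sinh_injective).injOn fun z ↦ yukawa c (√(s ^ 2 + z ^ 2))
  have hsqrt (u : ℝ) : √(s ^ 2 + (s * Real.sinh u) ^ 2) = s * Real.cosh u := by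
    rw [Real.sqrt_eq_iff_mul_self_eq (by positivity) (mul_pos hs (cosh_pos u)).le]
    linear_combination -s ^ 2 * Real.cosh_sq u
  have heven := integral_comp_abs (f := fun u ↦ Real.exp (-(s * c) * Real.cosh u))
  simp only [Real.cosh_abs] at heven
  rw [himage, Measure.restrict_univ] at hcov
  rw [besselKi_zero_eq, ← heven, hcov]
  congr with u
  have hpos : 0 < s * Real.cosh u := mul_pos hs (cosh_pos u)
  rw [hsqrt, yukawa, abs_of_pos hpos, smul_eq_mul, mul_div_cancel₀ _ hpos.ne', neg_mul,
    neg_mul, mul_right_comm, mul_comm c]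

theorem hasDerivAt_neg_exp_mul_sqrt_div {c t : ℝ} (hc : c ≠ 0) (ht : t ≠ 0) (ρ : ℝ) :
    HasDerivAt (fun ρ ↦ -(Real.exp (-c * √(t ^ 2 + ρ ^ 2)) / c))
      (ρ * yukawa c (√(t ^ 2 + ρ ^ 2))) ρ := by
  have hsq : HasDerivAt (fun ρ : ℝ ↦ t ^ 2 + ρ ^ 2) (2 * ρ) ρ := by
    simpa using (hasDerivAt_pow 2 ρ).const_add (t ^ 2)
  refine ((((hsq.sqrt (by positivity)).const_mul (-c)).exp.div_const c).neg).congr_deriv ?_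
  rw [yukawa]
  field_simp

theorem tendsto_neg_exp_mul_sqrt_div {c : ℝ} (hc : 0 < c) (t : ℝ) :
    Filter.Tendsto (fun ρ ↦ -(Real.exp (-c * √(t ^ 2 + ρ ^ 2)) / c)) Filter.atTop (nhds 0) := by
  have hsqrt : Filter.Tendsto (fun ρ ↦ √(t ^ 2 + ρ ^ 2)) Filter.atTop Filter.atTop :=
    Filter.tendsto_atTop_mono
      (fun ρ ↦ Real.le_sqrt_of_sq_le (le_add_of_nonneg_left (sq_nonneg t))) Filter.tendsto_id
  have hexp := tendsto_exp_atBot.comp (hsqrt.const_mul_atTop_of_neg (neg_neg_of_pos hc))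
  simpa using (hexp.div_const c).neg

theorem integrableOn_mul_yukawa_sqrt {c t : ℝ} (hc : 0 < c) (ht : t ≠ 0) :
    IntegrableOn (fun ρ ↦ ρ * yukawa c (√(t ^ 2 + ρ ^ 2))) (Ioi 0) :=
  integrableOn_Ioi_deriv_of_nonneg'
    (fun ρ _ ↦ hasDerivAt_neg_exp_mul_sqrt_div hc.ne' ht ρ)
    (fun _ hρ ↦ mul_nonneg (le_of_lt hρ) (yukawa_nonneg c (sqrt_nonneg _)))
    (tendsto_neg_exp_mul_sqrt_div hc t)

theorem integral_mul_yukawa_sqrt {c t : ℝ} (hc : 0 < c) (ht : 0 < t) :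
    ∫ ρ in Ioi (0 : ℝ), ρ * yukawa c (√(t ^ 2 + ρ ^ 2)) = Real.exp (-c * t) / c := by
  rw [integral_Ioi_of_hasDerivAt_of_tendsto'
    (fun ρ _ ↦ hasDerivAt_neg_exp_mul_sqrt_div hc.ne' ht.ne' ρ)
    (integrableOn_mul_yukawa_sqrt hc ht.ne') (tendsto_neg_exp_mul_sqrt_div hc t), zero_sub,
    neg_neg, zero_pow two_ne_zero, add_zero, sqrt_sq ht.le]

theorem integrable_yukawa_plane {c t : ℝ} (hc : 0 < c) (ht : 0 < t) :
    Integrable fun p : ℝ × ℝ ↦ yukawa c (√(√(t ^ 2 + p.1 ^ 2) ^ 2 + p.2 ^ 2)) := by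
  refine (integrable_comp_sqrt_sq_add_sq (integrableOn_mul_yukawa_sqrt hc ht.ne')).congr
    (.of_forall fun p ↦ ?_)
  simp only [sq_sqrt (add_nonneg (sq_nonneg _) (sq_nonneg _)), add_assoc]

theorem integral_yukawa_plane {c t : ℝ} (hc : 0 < c) (ht : 0 < t) :
    ∫ p : ℝ × ℝ, yukawa c (√(√(t ^ 2 + p.1 ^ 2) ^ 2 + p.2 ^ 2)) =
      2 * π * (Real.exp (-c * t) / c) := by
  rw [← integral_mul_yukawa_sqrt hc ht, ← integral_comp_sqrt_sq_add_sq]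
  simp only [sq_sqrt (add_nonneg (sq_nonneg _) (sq_nonneg _)), add_assoc]

theorem integrable_besselKi_zero_mul_sqrt {c t : ℝ} (hc : 0 < c) (ht : 0 < t) :
    Integrable fun r ↦ besselKi 0 (√(t ^ 2 + r ^ 2) * c) := by
  refine ((integrable_yukawa_plane hc ht).integral_prod_left.const_mul 2⁻¹).congr
    (.of_forall fun r ↦ ?_)
  simp only [integral_yukawa_line c (show 0 < √(t ^ 2 + r ^ 2) by positivity)]
  rw [inv_mul_cancel_left₀ two_ne_zero]

theorem integral_besselKi_zero_mul_sqrt {c t : ℝ} (hc : 0 < c) (ht : 0 < t) :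
    ∫ r : ℝ, besselKi 0 (√(t ^ 2 + r ^ 2) * c) = π / c * Real.exp (-c * t) := by
  have hplane := integral_yukawa_plane hc ht
  rw [Measure.volume_eq_prod, integral_prod _ (integrable_yukawa_plane hc ht)] at hplane
  have hline (r : ℝ) := integral_yukawa_line c (show 0 < √(t ^ 2 + r ^ 2) by positivity)
  simp only [hline, integral_const_mul] at hplane
  linear_combination hplane / 2

end Yukawa

section AbelTransform

open Set

theorem image_sqrt_sq_add_sq_Ioi {t : ℝ} (ht : 0 ≤ t) :
    (fun r ↦ √(t ^ 2 + r ^ 2)) '' Ioi 0 = Ioi t := by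
  refine Subset.antisymm ?_ fun y (hy : t < y) ↦ ?_
  · rintro _ ⟨r, hr : 0 < r, rfl⟩
    exact Real.lt_sqrt_of_sq_lt (lt_add_of_pos_right _ (by positivity))
  · have hpos : 0 < y ^ 2 - t ^ 2 := sub_pos.2 (by gcongr)
    refine ⟨√(y ^ 2 - t ^ 2), sqrt_pos.2 hpos, ?_⟩
    simp only [sq_sqrt hpos.le, add_sub_cancel, sqrt_sq (ht.trans hy.le)]

theorem injOn_sqrt_sq_add_sq (t : ℝ) : InjOn (fun r ↦ √(t ^ 2 + r ^ 2)) (Ioi 0) := by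
  intro r (hr : 0 < r) r' (hr' : 0 < r') h
  rw [sqrt_inj (by positivity) (by positivity)] at h
  exact (sq_eq_sq₀ hr.le hr'.le).1 (add_left_cancel h)

theorem hasDerivAt_sqrt_sq_add_sq (t : ℝ) {r : ℝ} (hr : r ≠ 0) :
    HasDerivAt (fun r ↦ √(t ^ 2 + r ^ 2)) (r / √(t ^ 2 + r ^ 2)) r := by
  have hsq : HasDerivAt (fun r : ℝ ↦ t ^ 2 + r ^ 2) (2 * r) r := by
    simpa using (hasDerivAt_pow 2 r).const_add (t ^ 2)
  exact (hsq.sqrt (by positivity)).congr_deriv (mul_div_mul_left _ _ two_ne_zero)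

theorem abs_deriv_sqrt_sq_add_sq_mul (f : ℝ → ℝ) (t : ℝ) {r : ℝ} (hr : 0 < r) :
    |r / √(t ^ 2 + r ^ 2)| •
        (√(t ^ 2 + r ^ 2) * f √(t ^ 2 + r ^ 2) / √(√(t ^ 2 + r ^ 2) ^ 2 - t ^ 2)) =
      f √(t ^ 2 + r ^ 2) := by
  have hsqrt : 0 < √(t ^ 2 + r ^ 2) := by positivity
  rw [abs_of_pos (div_pos hr hsqrt), sq_sqrt (by positivity), add_sub_cancel_left,
    sqrt_sq hr.le, smul_eq_mul]
  field_simp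

theorem integrableOn_mul_div_sqrt_sq_sub_sq_iff {f : ℝ → ℝ} {t : ℝ} (ht : 0 ≤ t) :
    IntegrableOn (fun y ↦ y * f y / √(y ^ 2 - t ^ 2)) (Ioi t) ↔
      IntegrableOn (fun r ↦ f √(t ^ 2 + r ^ 2)) (Ioi 0) := by
  rw [← image_sqrt_sq_add_sq_Ioi ht, integrableOn_image_iff_integrableOn_abs_deriv_smul
    measurableSet_Ioi (fun r hr ↦ (hasDerivAt_sqrt_sq_add_sq t (ne_of_gt hr)).hasDerivWithinAt)
    (injOn_sqrt_sq_add_sq t)]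
  exact integrableOn_congr_fun (fun r hr ↦ abs_deriv_sqrt_sq_add_sq_mul f t hr) measurableSet_Ioi

theorem integral_mul_div_sqrt_sq_sub_sq (f : ℝ → ℝ) {t : ℝ} (ht : 0 ≤ t) :
    ∫ y in Ioi t, y * f y / √(y ^ 2 - t ^ 2) = ∫ r in Ioi (0 : ℝ), f √(t ^ 2 + r ^ 2) := by
  rw [← image_sqrt_sq_add_sq_Ioi ht, integral_image_eq_integral_abs_deriv_smul
    measurableSet_Ioi (fun r hr ↦ (hasDerivAt_sqrt_sq_add_sq t (ne_of_gt hr)).hasDerivWithinAt)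
    (injOn_sqrt_sq_add_sq t)]
  exact setIntegral_congr_fun measurableSet_Ioi fun r hr ↦ abs_deriv_sqrt_sq_add_sq_mul f t hr

-- For `y ≤ t` the square root vanishes, and so does the quotient because `x / 0 = 0`.
theorem div_sqrt_sq_sub_sq_eq_zero {t y : ℝ} (hy : 0 ≤ y) (hyt : y ≤ t) (a : ℝ) :
    a / √(y ^ 2 - t ^ 2) = 0 := by
  rw [sqrt_eq_zero_of_nonpos (sub_nonpos.2 (by gcongr)), div_zero]

theorem integrableOn_mul_besselKi_zero_div_sqrt {c t : ℝ} (hc : 0 < c) (ht : 0 < t) :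
    IntegrableOn (fun y ↦ y * besselKi 0 (y * c) / √(y ^ 2 - t ^ 2)) (Ioi 0) := by
  refine IntegrableOn.of_forall_sdiff_eq_zero ?_ measurableSet_Ioi
    fun y hy ↦ div_sqrt_sq_sub_sq_eq_zero (le_of_lt hy.1) (not_lt.1 hy.2) _
  exact (integrableOn_mul_div_sqrt_sq_sub_sq_iff ht.le).2
    (integrable_besselKi_zero_mul_sqrt hc ht).integrableOn

theorem integral_mul_besselKi_zero_div_sqrt {c t : ℝ} (hc : 0 < c) (ht : 0 < t) :
    ∫ y in Ioi (0 : ℝ), y * besselKi 0 (y * c) / √(y ^ 2 - t ^ 2) =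
      π / (2 * c) * Real.exp (-c * t) := by
  have heven := integral_comp_abs (f := fun r ↦ besselKi 0 (√(t ^ 2 + r ^ 2) * c))
  simp only [sq_abs, integral_besselKi_zero_mul_sqrt hc ht] at heven
  rw [setIntegral_eq_of_subset_of_forall_sdiff_eq_zero measurableSet_Ioi (Ioi_subset_Ioi ht.le)
      fun y hy ↦ div_sqrt_sq_sub_sq_eq_zero (le_of_lt hy.1) (not_lt.1 hy.2) _,
    integral_mul_div_sqrt_sq_sub_sq (fun y ↦ besselKi 0 (y * c)) ht.le]
  linear_combination -heven / 2

/-- The Abel transform `y ↦ ∫₀^y k(t) / √(y² - t²) dt`, which takes `K_{in}` to the Lebedev kernel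
`Lₙ`. -/
noncomputable def abelTransform (k : ℝ → ℝ) (y : ℝ) : ℝ :=
  ∫ t in (0 : ℝ)..y, k t / √(y ^ 2 - t ^ 2)

theorem lebedevL_eq_abelTransform (n : ℕ) : lebedevL n = abelTransform (besselKi n) := rfl

theorem abelTransform_eq_integral_Ioi (k : ℝ → ℝ) {y : ℝ} (hy : 0 ≤ y) :
    abelTransform k y = ∫ t in Ioi (0 : ℝ), k t / √(y ^ 2 - t ^ 2) := by
  rw [abelTransform, intervalIntegral.integral_of_le hy]
  refine (setIntegral_eq_of_subset_of_forall_sdiff_eq_zero measurableSet_Ioi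
    Ioc_subset_Ioi_self fun t ht ↦ div_sqrt_sq_sub_sq_eq_zero hy ?_ _).symm
  exact not_lt.1 fun hty ↦ ht.2 ⟨ht.1, hty.le⟩

theorem aestronglyMeasurable_abelTransform {k : ℝ → ℝ}
    (hk : AEStronglyMeasurable k (volume.restrict (Ioi 0))) :
    AEStronglyMeasurable (abelTransform k) (volume.restrict (Ioi 0)) := by
  have hkernel : AEStronglyMeasurable (fun p : ℝ × ℝ ↦ k p.2 / √(p.1 ^ 2 - p.2 ^ 2))
      ((volume.restrict (Ioi 0)).prod (volume.restrict (Ioi 0))) :=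
    hk.comp_snd.div₀ (Continuous.aestronglyMeasurable (by fun_prop))
  refine hkernel.integral_prod_right'.congr ?_
  filter_upwards [ae_restrict_mem measurableSet_Ioi] with y hy
  exact (abelTransform_eq_integral_Ioi k (le_of_lt hy)).symm

theorem aestronglyMeasurable_of_integrableOn_mul_exp {k : ℝ → ℝ} {c : ℝ}
    (hk : IntegrableOn (fun t ↦ k t * Real.exp (-c * t)) (Ioi 0)) :
    AEStronglyMeasurable k (volume.restrict (Ioi 0)) := by
  refine (hk.aestronglyMeasurable.mul (g := fun t ↦ Real.exp (c * t)) (by fun_prop)).congr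
    (.of_forall fun t ↦ ?_)
  simp [mul_assoc, ← Real.exp_add]

theorem integrable_div_sqrt_mul_besselKi_zero_prod {k : ℝ → ℝ} {c : ℝ} (hc : 0 < c)
    (hk : IntegrableOn (fun t ↦ k t * Real.exp (-c * t)) (Ioi 0)) :
    Integrable (Function.uncurry fun t y : ℝ ↦
        k t / √(y ^ 2 - t ^ 2) * (y * besselKi 0 (y * c)))
      ((volume.restrict (Ioi 0)).prod (volume.restrict (Ioi 0))) := by
  have hbessel := measurable_besselKi 0
  have hmeas : AEStronglyMeasurable (fun p : ℝ × ℝ ↦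
      k p.1 * (p.2 * besselKi 0 (p.2 * c) / √(p.2 ^ 2 - p.1 ^ 2)))
      ((volume.restrict (Ioi 0)).prod (volume.restrict (Ioi 0))) :=
    (aestronglyMeasurable_of_integrableOn_mul_exp hk).comp_fst.mul
      (Measurable.aestronglyMeasurable (by fun_prop))
  simp only [div_mul_eq_mul_div, mul_div_assoc] at hmeas ⊢
  refine (integrable_prod_iff hmeas).2 ⟨?_, ?_⟩
  · filter_upwards [ae_restrict_mem measurableSet_Ioi] with t ht
    simpa only [mul_div_assoc] using
      (integrableOn_mul_besselKi_zero_div_sqrt hc ht).const_mul (k t)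
  · refine (hk.norm.const_mul (π / (2 * c))).congr ?_
    filter_upwards [ae_restrict_mem measurableSet_Ioi] with t ht
    rw [norm_mul, norm_of_nonneg (exp_pos _).le, mul_left_comm,
      ← integral_mul_besselKi_zero_div_sqrt hc ht, ← integral_const_mul]
    refine setIntegral_congr_fun measurableSet_Ioi fun y (hy : 0 < y) ↦ ?_
    have := besselKi_zero_nonneg (y * c)
    rw [norm_mul, mul_div_assoc, norm_of_nonneg (r := y * _) (by positivity)]

theorem integrableOn_abelTransform_mul_besselKi_zero {k : ℝ → ℝ} {c : ℝ} (hc : 0 < c)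
    (hk : IntegrableOn (fun t ↦ k t * Real.exp (-c * t)) (Ioi 0)) :
    IntegrableOn (fun y ↦ abelTransform k y * (y * besselKi 0 (y * c))) (Ioi 0) := by
  refine (integrable_div_sqrt_mul_besselKi_zero_prod hc hk).integral_prod_right.congr ?_
  filter_upwards [ae_restrict_mem measurableSet_Ioi] with y hy
  rw [abelTransform_eq_integral_Ioi k (le_of_lt hy), ← integral_mul_const]
  rfl

theorem integral_abelTransform_mul_besselKi_zero {k : ℝ → ℝ} {c : ℝ} (hc : 0 < c)
    (hk : IntegrableOn (fun t ↦ k t * Real.exp (-c * t)) (Ioi 0)) :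
    ∫ y in Ioi (0 : ℝ), abelTransform k y * (y * besselKi 0 (y * c)) =
      π / (2 * c) * ∫ t in Ioi (0 : ℝ), k t * Real.exp (-c * t) := by
  calc ∫ y in Ioi (0 : ℝ), abelTransform k y * (y * besselKi 0 (y * c))
    _ = ∫ y in Ioi (0 : ℝ), ∫ t in Ioi (0 : ℝ),
          k t / √(y ^ 2 - t ^ 2) * (y * besselKi 0 (y * c)) := by
      refine setIntegral_congr_fun measurableSet_Ioi fun y hy ↦ ?_
      rw [abelTransform_eq_integral_Ioi k (le_of_lt hy), ← integral_mul_const]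
    _ = ∫ t in Ioi (0 : ℝ), ∫ y in Ioi (0 : ℝ),
          k t / √(y ^ 2 - t ^ 2) * (y * besselKi 0 (y * c)) :=
      (integral_integral_swap (integrable_div_sqrt_mul_besselKi_zero_prod hc hk)).symm
    _ = ∫ t in Ioi (0 : ℝ), π / (2 * c) * (k t * Real.exp (-c * t)) := by
      refine setIntegral_congr_fun measurableSet_Ioi fun t ht ↦ ?_
      rw [mul_left_comm, ← integral_mul_besselKi_zero_div_sqrt hc ht, ← integral_const_mul]
      congr with y
      ring
    _ = _ := integral_const_mul _ _

end AbelTransform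

section LebedevCoefficients

open Set
open scoped Interval

theorem sinh_mul_cosh_mul_integral_lebedevL {n : ℕ} (hn : n ≠ 0) (u : ℝ) :
    Real.sinh u * Real.cosh u *
        ∫ y in Ioi (0 : ℝ), lebedevL n y * (y * besselKi 0 (y * Real.cosh u)) =
      π ^ 2 / 2 * (Real.sin (n * u) / Real.sinh (π * n)) := by
  have hcosh : 0 < Real.cosh u := cosh_pos u
  have hcosh' : -1 < Real.cosh u := neg_one_lt_zero.trans hcosh
  rw [lebedevL_eq_abelTransform, integral_abelTransform_mul_besselKi_zero hcosh
    (integrableOn_besselKi_mul_exp n hcosh'), integral_besselKi_mul_exp n hcosh']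
  have hcos := integral_cos_div_cosh_add_cosh (Nat.cast_ne_zero.2 hn) u
  field_simp at hcos ⊢
  linear_combination hcos

/-- Since `K₀` is decreasing and `cosh u ≥ 1`, the integrand at `u = 0` dominates. -/
theorem integrable_mul_abelTransform_prod {k : ℝ → ℝ} {μ : Measure ℝ} [SFinite μ] {w : ℝ → ℂ}
    (hk : IntegrableOn (fun t ↦ k t * Real.exp (-1 * t)) (Ioi 0)) (hw : Integrable w μ) :
    Integrable (Function.uncurry fun u y : ℝ ↦
        w u * ((abelTransform k y * (y * besselKi 0 (y * Real.cosh u)) : ℝ) : ℂ))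
      (μ.prod (volume.restrict (Ioi 0))) := by
  have hbessel := measurable_besselKi 0
  have hmeas : AEStronglyMeasurable (fun p : ℝ × ℝ ↦
      abelTransform k p.2 * (p.2 * besselKi 0 (p.2 * Real.cosh p.1)))
      (μ.prod (volume.restrict (Ioi 0))) :=
    (aestronglyMeasurable_abelTransform
      (aestronglyMeasurable_of_integrableOn_mul_exp hk)).comp_snd.mul
      (Measurable.aestronglyMeasurable (by fun_prop))
  refine (hw.norm.mul_prod (integrableOn_abelTransform_mul_besselKi_zero one_pos hk).norm).mono'
    (hw.aestronglyMeasurable.comp_fst.mul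
      (Complex.continuous_ofReal.comp_aestronglyMeasurable hmeas)) ?_
  filter_upwards [Measure.quasiMeasurePreserving_snd.ae (ae_restrict_mem measurableSet_Ioi)]
    with ⟨u, y⟩ (hy : 0 < y)
  have hle : besselKi 0 (y * Real.cosh u) ≤ besselKi 0 (y * 1) :=
    antitoneOn_besselKi_zero (by simpa using hy) (mul_pos hy (cosh_pos u))
      (by gcongr; exact one_le_cosh u)
  simp only [Function.uncurry_apply_pair, norm_mul, Complex.norm_real,
    norm_of_nonneg (besselKi_zero_nonneg _)]
  gcongr

theorem integral_lebedevL_mul_integral_besselKi_zero {n : ℕ} (hn : n ≠ 0) {ψ : ℝ → ℂ} {a b : ℝ}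
    (hψ : IntervalIntegrable ψ volume a b) :
    ∫ y in Ioi (0 : ℝ), (lebedevL n y : ℂ) * (((2 * y / π : ℝ) : ℂ) *
        ∫ u in a..b, (besselKi 0 (y * Real.cosh u) : ℂ) * (ψ u * Real.sinh u) * Real.cosh u) =
      (π / Real.sinh (π * n) : ℝ) * ∫ u in a..b, ψ u * Real.sin (n * u) := by
  have hw : IntegrableOn (fun u ↦ 2 / π * (ψ u * (Real.sinh u * Real.cosh u : ℝ))) (Ι a b) :=
    ((hψ.mul_continuousOn (by fun_prop)).const_mul _).def'
  have hprod := integrable_mul_abelTransform_prod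
    (integrableOn_besselKi_mul_exp n (neg_lt_self one_pos)) hw
  calc _
    _ = ∫ y in Ioi (0 : ℝ), ∫ u in a..b, 2 / π * (ψ u * (Real.sinh u * Real.cosh u : ℝ)) *
          ((lebedevL n y * (y * besselKi 0 (y * Real.cosh u)) : ℝ) : ℂ) := by
      congr with y
      rw [← intervalIntegral.integral_const_mul, ← intervalIntegral.integral_const_mul]
      congr with u
      push_cast
      ring
    _ = ∫ u in a..b, ∫ y in Ioi (0 : ℝ), 2 / π * (ψ u * (Real.sinh u * Real.cosh u : ℝ)) *
          ((lebedevL n y * (y * besselKi 0 (y * Real.cosh u)) : ℝ) : ℂ) :=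
      (intervalIntegral_integral_swap hprod).symm
    _ = ∫ u in a..b, (π / Real.sinh (π * n) : ℝ) * (ψ u * Real.sin (n * u)) := by
      congr with u
      have hu := congrArg Complex.ofReal (sinh_mul_cosh_mul_integral_lebedevL hn u)
      rw [Complex.ofReal_mul] at hu
      rw [integral_const_mul, integral_complex_ofReal, mul_assoc, mul_assoc, hu]
      push_cast
      field_simp
    _ = _ := intervalIntegral.integral_const_mul _ _

end LebedevCoefficients

section Inversion

open Set

theorem memLp_of_norm_sub_le_mul_abs {ψ : ℝ → ℂ} {a b C : ℝ} (p : ENNReal)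
    (hψ : ∀ u ∈ Icc a b, ∀ v ∈ Icc a b, ‖ψ u - ψ v‖ ≤ C * |u - v|) :
    MemLp ψ p (volume.restrict (Ioc a b)) := by
  have hlip : LipschitzOnWith C.toNNReal ψ (Icc a b) :=
    LipschitzOnWith.of_dist_le_mul fun u hu v hv ↦ by
      rw [dist_eq_norm, dist_eq]
      exact (hψ u hu v hv).trans (by gcongr; exact Real.le_coe_toNNReal C)
  obtain ⟨B, hB⟩ := isCompact_Icc.exists_bound_of_continuousOn hlip.continuousOn
  refine .of_bound ((hlip.continuousOn.mono Ioc_subset_Icc_self).aestronglyMeasurable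
    measurableSet_Ioc) B ?_
  filter_upwards [ae_restrict_mem measurableSet_Ioc] with u hu
  exact hB u (Ioc_subset_Icc_self hu)

theorem memLp_besselKi_zero_mul_sinh {x : ℝ} (hx : 0 < x) (a b : ℝ) (p : ENNReal) :
    MemLp (fun u ↦ ((besselKi 0 (x * Real.cosh u) * Real.sinh (2 * u) : ℝ) : ℂ)) p
      (volume.restrict (Ioc a b)) := by
  have hbessel := measurable_besselKi 0
  obtain ⟨B, hB⟩ := (isCompact_Icc (a := a) (b := b)).exists_bound_of_continuousOn
    (f := fun u ↦ Real.sinh (2 * u)) (by fun_prop)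
  refine .of_bound (Measurable.aestronglyMeasurable (by fun_prop)) (besselKi 0 x * B) ?_
  filter_upwards [ae_restrict_mem measurableSet_Ioc] with u hu
  rw [Complex.norm_real, norm_mul, norm_of_nonneg (besselKi_zero_nonneg _)]
  exact mul_le_mul (antitoneOn_besselKi_zero hx (mul_pos hx (cosh_pos u))
      (le_mul_of_one_le_right hx.le (one_le_cosh u)))
    (hB u (Ioc_subset_Icc_self hu)) (norm_nonneg _) (besselKi_zero_nonneg _)

theorem ofReal_PhiKer (n : ℕ) (x : ℝ) :
    (PhiKer n x : ℂ) = x * ∫ u in (-π)..π,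
      ((besselKi 0 (x * Real.cosh u) * Real.sinh (2 * u) : ℝ) : ℂ) * Real.sin (n * u) := by
  simp only [PhiKer, Complex.ofReal_mul, ← intervalIntegral.integral_ofReal]

theorem hasSum_PhiKer_mul_integral_mul_sin {ψ : ℝ → ℂ}
    (hψ : MemLp ψ 2 (volume.restrict (Ioc (-π) π))) {x : ℝ} (hx : 0 < x) :
    HasSum (fun n : ℕ ↦ (PhiKer (n + 1) x : ℂ) *
        ∫ u in (-π)..π, ψ u * Real.sin ((n + 1 : ℕ) * u))
      (2 * π * x * ∫ u in (-π)..π,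
        (besselKi 0 (x * Real.cosh u) : ℂ) * (ψ u * Real.sinh u) * Real.cosh u) := by
  have hsum := (hasSum_integral_mul_sin (fun u ↦ by simp)
    (memLp_besselKi_zero_mul_sinh hx _ _ 2) hψ).mul_left (x : ℂ)
  convert! hsum using 1
  · ext n
    rw [ofReal_PhiKer, mul_assoc]
  · rw [← intervalIntegral.integral_const_mul, ← mul_assoc, ← intervalIntegral.integral_const_mul]
    congr with u
    rw [Real.sinh_two_mul]
    push_cast
    ring

end Inversion

theorem lebedev_discrete_inversion_first_general
    (ψ : ℝ → ℂ) (hψ : MemLp ψ 2 (volume.restrict (Set.Ioc (-π) π)))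
    (φ : ℝ → ℂ) (hφ : ∀ u : ℝ, φ u = ψ u * Real.sinh u)
    (f : ℝ → ℂ)
    (hf : ∀ x : ℝ, 0 < x → f x = ((2 * x / π : ℝ) : ℂ) *
      ∫ u in (-π)..π, ((besselKi 0 (x * Real.cosh u) : ℝ) : ℂ) * φ u * (Real.cosh u : ℂ))
    (a : ℕ → ℂ)
    (ha : ∀ n : ℕ, a n = ∫ y in Set.Ioi (0 : ℝ), ((lebedevL n y : ℝ) : ℂ) * f y) :
    ∀ x : ℝ, 0 < x →
      HasSum (fun n : ℕ =>
          ((Real.sinh (π * ((n : ℝ) + 1)) * PhiKer (n + 1) x : ℝ) : ℂ) * a (n + 1))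
        (((π ^ 3 : ℝ) : ℂ) * f x) := by
  intro x hx
  simp only [hφ] at hf
  have hψint : IntervalIntegrable ψ volume (-π) π :=
    (intervalIntegrable_iff_integrableOn_Ioc_of_le (neg_lt_self pi_pos).le).2
      (hψ.integrable one_le_two)
  have hcoeff {n : ℕ} (hn : n ≠ 0) : a n =
      (π / Real.sinh (π * n) : ℝ) * ∫ u in (-π)..π, ψ u * Real.sin (n * u) := by
    rw [ha, ← integral_lebedevL_mul_integral_besselKi_zero hn hψint]
    exact setIntegral_congr_fun measurableSet_Ioi fun y hy ↦ by rw [hf y hy]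
  convert! (hasSum_PhiKer_mul_integral_mul_sin hψ hx).mul_left (π : ℂ) using 1
  · ext n
    have hsinh : Real.sinh (π * (n + 1 : ℕ)) ≠ 0 := by
      simp [Real.sinh_eq_zero, pi_ne_zero, Nat.cast_add_one_ne_zero]
    have hsinh' : Complex.sinh (π * (n + 1 : ℕ)) ≠ 0 := mod_cast hsinh
    rw [hcoeff n.succ_ne_zero]
    push_cast at hsinh' ⊢
    field_simp
  · rw [hf x hx]
    push_cast
    field_simp

/-- Theorem 1: inversion of the discrete Lebedev transform (1.4). -/
theorem lebedev_discrete_inversion_first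
    (C : ℝ) (hC : 0 < C) (ψ : ℝ → ℂ)
    (hper : ∀ u : ℝ, ψ (u + 2 * π) = ψ u)
    (hlip : ∀ u ∈ Set.Icc (-π) π, ∀ v ∈ Set.Icc (-π) π, ‖ψ u - ψ v‖ ≤ C * |u - v|)
    (φ : ℝ → ℂ) (hφ : ∀ u : ℝ, φ u = ψ u * Real.sinh u)
    (f : ℝ → ℂ)
    (hf : ∀ x : ℝ, 0 < x → f x = ((2 * x / π : ℝ) : ℂ) *
      ∫ u in (-π)..π, ((besselKi 0 (x * Real.cosh u) : ℝ) : ℂ) * φ u * (Real.cosh u : ℂ))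
    (a : ℕ → ℂ)
    (ha : ∀ n : ℕ, a n = ∫ y in Set.Ioi (0 : ℝ), ((lebedevL n y : ℝ) : ℂ) * f y) :
    ∀ x : ℝ, 0 < x →
      HasSum (fun n : ℕ =>
          ((Real.sinh (π * ((n : ℝ) + 1)) * PhiKer (n + 1) x : ℝ) : ℂ) * a (n + 1))
        (((π ^ 3 : ℝ) : ℂ) * f x) :=
  lebedev_discrete_inversion_first_general ψ (memLp_of_norm_sub_le_mul_abs 2 hlip) φ hφ f hf a ha
end

section
/- For every a > 0 and t > 0, ∫₀^t [2/π + x a M₀(a x)]/(t² − x²)^{1/2} dx = e^{−a t}, where M₀ is the modified Struve function. -/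
/-!
The substitution `x = t sin φ` turns the integral into
`∫₀^{π/2} [2/π + s sin φ M₀(s sin φ)] dφ` with `s = a t`, so the claim is that
`(2/π) ∫₀^{π/2} ∫₀^{π/2} s sin φ exp (-s sin φ cos θ) dθ dφ = 1 - exp (-s)`.
Here `sin φ dθ dφ` is the area element on an octant of the unit sphere and `sin φ cos θ` is a
Cartesian coordinate, which by Archimedes' hat-box theorem is uniformly distributed on `[0, 1]`.
Hence the double integral is `(π/2) ∫₀¹ s exp (-s x) dx`.

For integrands given by power series, Archimedes' theorem amounts to a comparison of moments, and
the `n`-th moment of the coordinate on the octant is the product of two consecutive Wallis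
integrals, namely `(π/2) / (n + 1)`.
-/

open MeasureTheory Real

/-- The modified Struve function `M₀(z) = −(2/π) ∫₀^{π/2} e^{−z cos θ} dθ`. -/
noncomputable def struveM (z : ℂ) : ℂ :=
  -(2 / π) * ∫ θ in (0 : ℝ)..(π / 2), Complex.exp (-z * Real.cos θ)

section WallisIntegral

/-- The Wallis integral `∫₀^{π/2} cosⁿ θ dθ`, whose products of consecutive terms are the moments of
a coordinate function on an octant of the unit sphere. -/
noncomputable def wallisIntegral (n : ℕ) : ℝ :=
  ∫ θ in (0 : ℝ)..(π / 2), cos θ ^ n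

lemma integral_sin_pow_eq_wallisIntegral (n : ℕ) :
    ∫ φ in (0 : ℝ)..(π / 2), sin φ ^ n = wallisIntegral n := by
  simpa [wallisIntegral, cos_pi_div_two_sub] using
    intervalIntegral.integral_comp_sub_left (a := 0) (b := π / 2) (fun x ↦ cos x ^ n) (π / 2)

lemma wallisIntegral_add_two (n : ℕ) :
    wallisIntegral (n + 2) = (n + 1) / (n + 2) * wallisIntegral n := by
  simp [wallisIntegral, integral_cos_pow]

lemma wallisIntegral_succ_mul_self (n : ℕ) :
    wallisIntegral (n + 1) * wallisIntegral n = π / 2 * (n + 1 : ℝ)⁻¹ := by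
  induction n with
  | zero => simp [wallisIntegral]
  | succ n ih =>
    calc wallisIntegral (n + 2) * wallisIntegral (n + 1)
        = (n + 1) / (n + 2) * (wallisIntegral (n + 1) * wallisIntegral n) := by
          rw [wallisIntegral_add_two]; ring
      _ = π / 2 * ((n + 1 : ℕ) + 1 : ℝ)⁻¹ := by
          rw [ih]; push_cast; field_simp; ring

lemma abs_wallisIntegral_le (n : ℕ) : |wallisIntegral n| ≤ π / 2 := by
  have hcos (θ : ℝ) : ‖cos θ ^ n‖ ≤ 1 := by
    simpa using pow_le_one₀ (abs_nonneg _) (abs_cos_le_one θ)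
  simpa [wallisIntegral, abs_of_pos pi_div_two_pos] using
    intervalIntegral.norm_integral_le_of_norm_le_const (a := 0) (b := π / 2) fun θ _ ↦ hcos θ

end WallisIntegral

section PowerSeries

variable {E : Type*} [NormedAddCommGroup E] [NormedSpace ℝ E] [CompleteSpace E]
  {c : ℕ → E} {f : ℝ → E}

lemma hasSum_intervalIntegral_smul_comp {μ : Measure ℝ} {u v : ℝ} {w X : ℝ → ℝ}
    (hw : IntervalIntegrable w μ u v) (hX : AEStronglyMeasurable X (μ.restrict (Set.uIoc u v)))
    (hX_le : ∀ x ∈ Set.uIoc u v, |X x| ≤ 1) (hc : Summable fun n ↦ ‖c n‖)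
    (hf : ∀ x, |x| ≤ 1 → HasSum (fun n ↦ x ^ n • c n) (f x)) :
    HasSum (fun n ↦ (∫ x in u..v, w x * X x ^ n ∂μ) • c n) (∫ x in u..v, w x • f (X x) ∂μ) := by
  simp only [← intervalIntegral.integral_smul_const]
  refine intervalIntegral.hasSum_integral_of_dominated_convergence (fun n x ↦ |w x| * ‖c n‖)
    (fun n ↦ (hw.aestronglyMeasurable_restrict_uIoc.mul (hX.pow n)).smul_const _)
    (fun n ↦ .of_forall fun x hx ↦ ?_) (.of_forall fun x _ ↦ hc.mul_left _) ?_
    (.of_forall fun x hx ↦ ?_)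
  · have hpow : |X x ^ n| ≤ 1 := by
      simpa using pow_le_one₀ (abs_nonneg _) (hX_le x hx)
    rw [norm_smul, norm_mul, norm_eq_abs, norm_eq_abs]
    gcongr
    exact mul_le_of_le_one_right (abs_nonneg _) hpow
  · simpa only [tsum_mul_left] using hw.abs.mul_const _
  · simpa only [mul_smul] using (hf _ (hX_le x hx)).const_smul (w x)

lemma hasSum_integral_comp_mul_cos (hc : Summable fun n ↦ ‖c n‖)
    (hf : ∀ x, |x| ≤ 1 → HasSum (fun n ↦ x ^ n • c n) (f x)) {r : ℝ} (hr : |r| ≤ 1) :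
    HasSum (fun n ↦ r ^ n • wallisIntegral n • c n)
      (∫ θ in (0 : ℝ)..(π / 2), f (r * cos θ)) := by
  have hrc : Summable fun n ↦ ‖r ^ n • c n‖ := by
    refine hc.of_nonneg_of_le (fun _ ↦ norm_nonneg _) fun n ↦ ?_
    rw [norm_smul, norm_pow]
    exact mul_le_of_le_one_left (norm_nonneg _) (pow_le_one₀ (norm_nonneg _) hr)
  have hrf (x : ℝ) (hx : |x| ≤ 1) : HasSum (fun n ↦ x ^ n • r ^ n • c n) (f (r * x)) := by
    have hrx : |r * x| ≤ 1 := by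
      rw [abs_mul]; exact mul_le_one₀ hr (abs_nonneg _) hx
    simpa only [mul_pow, mul_comm (r ^ _), mul_smul] using hf _ hrx
  simpa [wallisIntegral, smul_comm (r ^ _)] using
    hasSum_intervalIntegral_smul_comp (μ := volume) (u := 0) (v := π / 2) (w := 1)
      intervalIntegrable_const continuous_cos.aestronglyMeasurable
      (fun θ _ ↦ abs_cos_le_one θ) hrc hrf

lemma hasSum_integral_sin_smul_integral_comp (hc : Summable fun n ↦ ‖c n‖)
    (hf : ∀ x, |x| ≤ 1 → HasSum (fun n ↦ x ^ n • c n) (f x)) :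
    HasSum (fun n : ℕ ↦ (π / 2 * (n + 1 : ℝ)⁻¹) • c n)
      (∫ φ in (0 : ℝ)..(π / 2), sin φ • ∫ θ in (0 : ℝ)..(π / 2), f (sin φ * cos θ)) := by
  have hWc : Summable fun n ↦ ‖wallisIntegral n • c n‖ := by
    refine (hc.mul_left (π / 2)).of_nonneg_of_le (fun _ ↦ norm_nonneg _) fun n ↦ ?_
    rw [norm_smul, norm_eq_abs]
    gcongr
    exact abs_wallisIntegral_le n
  simpa only [← pow_succ', integral_sin_pow_eq_wallisIntegral, smul_smul,
      wallisIntegral_succ_mul_self] using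
    hasSum_intervalIntegral_smul_comp (μ := volume) (continuous_sin.intervalIntegrable 0 (π / 2))
      continuous_sin.aestronglyMeasurable (fun φ _ ↦ abs_sin_le_one φ) hWc
      fun r hr ↦ hasSum_integral_comp_mul_cos hc hf hr

lemma hasSum_integral_zero_one (hc : Summable fun n ↦ ‖c n‖)
    (hf : ∀ x, |x| ≤ 1 → HasSum (fun n ↦ x ^ n • c n) (f x)) :
    HasSum (fun n : ℕ ↦ (n + 1 : ℝ)⁻¹ • c n) (∫ x in (0 : ℝ)..1, f x) := by
  have habs (x : ℝ) (hx : x ∈ Set.uIoc (0 : ℝ) 1) : |x| ≤ 1 := by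
    rw [Set.uIoc_of_le zero_le_one] at hx
    exact abs_le.2 ⟨by linarith [hx.1], hx.2⟩
  simpa using
    hasSum_intervalIntegral_smul_comp (μ := volume) (w := 1) (X := id) intervalIntegrable_const
      aestronglyMeasurable_id habs hc hf

/-- Archimedes' hat-box theorem on an octant of the unit sphere, in spherical coordinates whose
polar axis is orthogonal to the coordinate `sin φ * cos θ`. -/
theorem integral_sin_smul_integral_comp_sin_mul_cos (hc : Summable fun n ↦ ‖c n‖)
    (hf : ∀ x, |x| ≤ 1 → HasSum (fun n ↦ x ^ n • c n) (f x)) :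
    ∫ φ in (0 : ℝ)..(π / 2), sin φ • ∫ θ in (0 : ℝ)..(π / 2), f (sin φ * cos θ) =
      (π / 2) • ∫ x in (0 : ℝ)..1, f x :=
  (hasSum_integral_sin_smul_integral_comp hc hf).unique <| by
    simpa only [smul_smul] using (hasSum_integral_zero_one hc hf).const_smul (π / 2)

end PowerSeries

section Exponential

lemma mul_integral_cexp_neg_mul (s : ℂ) :
    s * ∫ x in (0 : ℝ)..1, Complex.exp (-s * x) = 1 - Complex.exp (-s) := by
  have hderiv (x : ℝ) :
      HasDerivAt (fun x : ℝ ↦ -Complex.exp (-s * x)) (s * Complex.exp (-s * x)) x := by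
    convert! ((Complex.ofRealCLM.hasDerivAt (x := x)).const_mul (-s)).cexp.neg using 1
    simp only [Complex.ofRealCLM_apply, Complex.ofReal_one]
    ring
  rw [← intervalIntegral.integral_const_mul,
    intervalIntegral.integral_eq_sub_of_hasDerivAt (fun x _ ↦ hderiv x)
      (Continuous.intervalIntegrable (by fun_prop) _ _)]
  simp only [Complex.ofReal_one, Complex.ofReal_zero, mul_one, mul_zero, Complex.exp_zero]
  ring

lemma mul_integral_sin_smul_integral_cexp (s : ℂ) :
    s * ∫ φ in (0 : ℝ)..(π / 2), sin φ • ∫ θ in (0 : ℝ)..(π / 2),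
      Complex.exp (-s * (sin φ * cos θ : ℝ)) = π / 2 * (1 - Complex.exp (-s)) := by
  have hc : Summable fun n : ℕ ↦ ‖(-s) ^ n / (n.factorial : ℂ)‖ :=
    NormedSpace.norm_expSeries_div_summable (-s)
  have hf (x : ℝ) :
      HasSum (fun n : ℕ ↦ x ^ n • ((-s) ^ n / (n.factorial : ℂ))) (Complex.exp (-s * x)) := by
    rw [Complex.exp_eq_exp_ℂ]
    convert! NormedSpace.expSeries_div_hasSum_exp (-s * x) using 2 with n
    rw [Complex.real_smul, mul_pow]
    push_cast
    ring
  rw [integral_sin_smul_integral_comp_sin_mul_cos hc fun x _ ↦ hf x, Complex.real_smul,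
    mul_left_comm, mul_integral_cexp_neg_mul]
  push_cast
  rfl

end Exponential

section Struve

lemma continuous_struveM : Continuous struveM := by
  unfold struveM
  fun_prop

lemma struveM_mul_ofReal (s : ℂ) (r : ℝ) :
    struveM (s * r) =
      -(2 / π) * ∫ θ in (0 : ℝ)..(π / 2), Complex.exp (-s * (r * cos θ : ℝ)) := by
  simp only [struveM, Complex.ofReal_mul, neg_mul, mul_assoc]

lemma integral_sin_mul_struveM (s : ℂ) :
    ∫ φ in (0 : ℝ)..(π / 2), s * sin φ * struveM (s * sin φ) = Complex.exp (-s) - 1 := by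
  calc ∫ φ in (0 : ℝ)..(π / 2), s * sin φ * struveM (s * sin φ)
      = -(2 / π) * (s * ∫ φ in (0 : ℝ)..(π / 2), sin φ • ∫ θ in (0 : ℝ)..(π / 2),
          Complex.exp (-s * (sin φ * cos θ : ℝ))) := by
        rw [← intervalIntegral.integral_const_mul, ← intervalIntegral.integral_const_mul]
        refine intervalIntegral.integral_congr fun φ _ ↦ ?_
        simp only [struveM_mul_ofReal, Complex.real_smul]
        ring
    _ = Complex.exp (-s) - 1 := by
        have hpi : (π : ℂ) ≠ 0 := Complex.ofReal_ne_zero.2 pi_ne_zero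
        rw [mul_integral_sin_smul_integral_cexp]
        field_simp
        ring

end Struve

lemma sqrt_sq_sub_mul_sin_sq {t φ : ℝ} (ht : 0 ≤ t) (hφ : 0 ≤ cos φ) :
    √(t ^ 2 - (t * sin φ) ^ 2) = t * cos φ := by
  rw [show t ^ 2 - (t * sin φ) ^ 2 = (t * cos φ) ^ 2 by rw [mul_pow, mul_pow, cos_sq']; ring]
  exact sqrt_sq (mul_nonneg ht hφ)

lemma integral_inv_sqrt_sq_sub_sq_smul {E : Type*} [NormedAddCommGroup E] [NormedSpace ℝ E]
    (g : ℝ → E) {t α β : ℝ} (ht : 0 < t) (hα : α ∈ Set.Icc (-(π / 2)) (π / 2))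
    (hβ : β ∈ Set.Icc (-(π / 2)) (π / 2)) :
    ∫ x in (t * sin α)..(t * sin β), (√(t ^ 2 - x ^ 2))⁻¹ • g x =
      ∫ φ in α..β, g (t * sin φ) := by
  have hcos (φ : ℝ) (hφ : φ ∈ Set.uIoo α β) : 0 < cos φ :=
    cos_pos_of_mem_Ioo ⟨(le_min hα.1 hβ.1).trans_lt hφ.1, hφ.2.trans_le (max_le hα.2 hβ.2)⟩
  rw [← intervalIntegral.integral_deriv_smul_comp_of_deriv_nonneg (f := fun φ ↦ t * sin φ)
    (f' := fun φ ↦ t * cos φ) (by fun_prop)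
    (fun φ _ ↦ (hasDerivAt_sin φ).const_mul t) fun φ hφ ↦ (mul_pos ht (hcos φ hφ)).le]
  refine intervalIntegral.integral_congr_uIoo fun φ hφ ↦ ?_
  have hpos : 0 < t * cos φ := mul_pos ht (hcos φ hφ)
  simp only [Function.comp_apply, sqrt_sq_sub_mul_sin_sq ht.le (hcos φ hφ).le, smul_smul,
    mul_inv_cancel₀ hpos.ne', one_smul]

lemma integral_zero_div_sqrt_sq_sub_sq (g : ℝ → ℂ) {t : ℝ} (ht : 0 < t) :
    ∫ x in (0 : ℝ)..t, g x / (√(t ^ 2 - x ^ 2) : ℝ) = ∫ φ in (0 : ℝ)..(π / 2), g (t * sin φ) := by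
  have h0 : (0 : ℝ) ∈ Set.Icc (-(π / 2)) (π / 2) := by simp [pi_div_two_pos.le]
  have hpi : π / 2 ∈ Set.Icc (-(π / 2)) (π / 2) := by simp [pi_div_two_pos.le]
  simpa only [sin_zero, mul_zero, sin_pi_div_two, mul_one, Complex.real_smul, Complex.ofReal_inv,
    ← div_eq_inv_mul] using integral_inv_sqrt_sq_sub_sq_smul g ht h0 hpi

theorem integral_struveM_sqrt_general (a : ℂ) {t : ℝ} (ht : 0 < t) :
    ∫ x in (0 : ℝ)..t, (2 / π + x * a * struveM (a * x)) / (√(t ^ 2 - x ^ 2) : ℝ) =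
      Complex.exp (-(a * t)) := by
  have hpi : (π : ℂ) ≠ 0 := Complex.ofReal_ne_zero.2 pi_ne_zero
  have hcont : Continuous fun φ : ℝ ↦ a * t * sin φ * struveM (a * t * sin φ) := by
    have := continuous_struveM
    fun_prop
  calc ∫ x in (0 : ℝ)..t, (2 / π + x * a * struveM (a * x)) / (√(t ^ 2 - x ^ 2) : ℝ)
      = ∫ φ in (0 : ℝ)..(π / 2), (2 / π + a * t * sin φ * struveM (a * t * sin φ)) := by
        have hat (φ : ℝ) : a * (t * sin φ : ℝ) = a * t * sin φ := by push_cast; ring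
        rw [integral_zero_div_sqrt_sq_sub_sq _ ht]
        simp only [mul_comm _ a, hat]
    _ = 1 + (Complex.exp (-(a * t)) - 1) := by
        rw [intervalIntegral.integral_add intervalIntegrable_const (hcont.intervalIntegrable _ _),
          integral_sin_mul_struveM, intervalIntegral.integral_const, Complex.real_smul]
        congr 1
        push_cast
        field_simp
        ring
    _ = Complex.exp (-(a * t)) := by ring

/-- `∫₀^t [2/π + x a M₀(a x)]/(t² − x²)^{1/2} dx = e^{−a t}` for `a, t > 0`. -/
theorem integral_struveM_sqrt (a t : ℝ) (ha : 0 < a) (ht : 0 < t) :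
    ∫ x in (0 : ℝ)..t,
        (((2 / π : ℝ) : ℂ) + ((x * a : ℝ) : ℂ) * struveM ((a * x : ℝ) : ℂ)) /
          ((Real.sqrt (t ^ 2 - x ^ 2) : ℝ) : ℂ) =
      ((Real.exp (-(a * t)) : ℝ) : ℂ) := by
  simpa using integral_struveM_sqrt_general (a : ℂ) ht
end

section
/- Let ψ : ℝ → ℂ be a 2π-periodic function satisfying the Lipschitz condition |ψ(u) − ψ(v)| ≤ C|u − v| for all u, v ∈ [−π, π], let φ(u) = ψ(u) sinh(u), and let f(x) = (2x/π) ∫_{−π}^{π} K₀(x cosh u) φ(u) cosh(u) du for x > 0. Then for every n ∈ ℕ the double integral ∫₀^∞ |K_{in}(t)| ∫_t^∞ |f(y)|/(y² − t²)^{1/2} dy dt is finite, and ∫₀^∞ (∫₀^y K_{in}(t)/(y² − t²)^{1/2} dt) f(y) dy = ∫₀^∞ K_{in}(t) (∫_t^∞ f(y)/(y² − t²)^{1/2} dy) dt. -/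
open MeasureTheory Real

/-!
By `cosh u ≥ 1 + u² / 2` and the Gaussian integral, `|K_{iτ}(x)| ≤ √(π / (2x)) e^{-x}` for `x > 0`.
Hence `K_{iτ}` is integrable on `(0, ∞)`, and, as `cosh u ≥ 1`, a superposition of the functions
`K_{iσ}(x cosh u)` with an integrable density gives `‖f y‖ ≤ M √y e^{-y}`. For `0 < t < y` the
factorisation `y² - t² = (y + t) (y - t)` yields `√y / √(y² - t²) ≤ 1 / √(y - t)`, so that
`∫_t^∞ ‖f y‖ / √(y² - t²) dy ≤ M ∫_0^∞ e^{-s} / √s ds`, uniformly in `t`. The double integral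
therefore converges absolutely, and the interchange is Fubini's theorem on the sector `0 < t < y`.
-/

open Set Function

section Fubini

variable {α E : Type*} [LinearOrder α] [TopologicalSpace α] [OrderClosedTopology α]
  [SecondCountableTopology α] [MeasurableSpace α] [OpensMeasurableSpace α]
  [NormedAddCommGroup E] [NormedSpace ℝ E]

theorem setIntegral_Ioi_setIntegral_Ioi_swap {μ : Measure α} [SFinite μ] (a : α) {G : α → α → E}
    (hG : AEStronglyMeasurable (uncurry G) ((μ.restrict (Ioi a)).prod (μ.restrict (Ioi a))))
    (hfin : ∫⁻ t in Ioi a, ∫⁻ y in Ioi t, ‖G t y‖ₑ ∂μ ∂μ < ⊤) :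
    ∫ t in Ioi a, ∫ y in Ioi t, G t y ∂μ ∂μ = ∫ y in Ioi a, ∫ t in Ioo a y, G t y ∂μ ∂μ := by
  let H (t y : α) : E := (Ioi t).indicator (G t) y
  have hH : AEStronglyMeasurable (uncurry H)
      ((μ.restrict (Ioi a)).prod (μ.restrict (Ioi a))) :=
    hG.indicator (measurableSet_lt measurable_fst measurable_snd)
  have inter_eq {t : α} (ht : t ∈ Ioi a) : Ioi a ∩ Ioi t = Ioi t :=
    inter_eq_right.2 (Ioi_subset_Ioi (le_of_lt ht))
  have hH_int : Integrable (uncurry H) ((μ.restrict (Ioi a)).prod (μ.restrict (Ioi a))) := by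
    refine ⟨hH, ?_⟩
    rw [HasFiniteIntegral, lintegral_prod _ hH.enorm]
    refine (setLIntegral_congr_fun measurableSet_Ioi fun t ht => ?_).trans_lt hfin
    simp only [uncurry_apply_pair, H, enorm_indicator_eq_indicator_enorm]
    rw [setLIntegral_indicator measurableSet_Ioi, inter_comm, inter_eq ht]
  have integral_H_fst (y : α) : ∫ t in Ioi a, H t y ∂μ = ∫ t in Ioo a y, G t y ∂μ := by
    change ∫ t in Ioi a, (Iio y).indicator (G · y) t ∂μ = _
    rw [setIntegral_indicator measurableSet_Iio, Ioi_inter_Iio]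
  have integral_H_snd {t : α} (ht : t ∈ Ioi a) :
      ∫ y in Ioi a, H t y ∂μ = ∫ y in Ioi t, G t y ∂μ := by
    rw [setIntegral_indicator measurableSet_Ioi, inter_eq ht]
  calc ∫ t in Ioi a, ∫ y in Ioi t, G t y ∂μ ∂μ
      = ∫ t in Ioi a, ∫ y in Ioi a, H t y ∂μ ∂μ :=
        setIntegral_congr_fun measurableSet_Ioi fun _ ht => (integral_H_snd ht).symm
    _ = ∫ y in Ioi a, ∫ t in Ioi a, H t y ∂μ ∂μ := integral_integral_swap hH_int
    _ = ∫ y in Ioi a, ∫ t in Ioo a y, G t y ∂μ ∂μ := by simp only [integral_H_fst]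

end Fubini

section AbelKernel

theorem integrableOn_exp_neg_div_sqrt : IntegrableOn (fun s : ℝ => exp (-s) / √s) (Ioi 0) := by
  refine (GammaIntegral_convergent one_half_pos).congr_fun (fun s hs => ?_) measurableSet_Ioi
  have hexp : (1 / 2 - 1 : ℝ) = -(1 / 2) := by norm_num
  simp only [hexp, rpow_neg (le_of_lt hs), ← sqrt_eq_rpow]
  rw [div_eq_mul_inv]

theorem sqrt_div_sqrt_sq_sub_sq_le {t y : ℝ} (ht : 0 ≤ t) (hty : t < y) :
    √y / √(y ^ 2 - t ^ 2) ≤ 1 / √(y - t) := by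
  have hy : 0 < √y := sqrt_pos.2 (ht.trans_lt hty)
  have hyt : 0 < √(y - t) := sqrt_pos.2 (sub_pos.2 hty)
  calc √y / √(y ^ 2 - t ^ 2) = √y / (√(y + t) * √(y - t)) := by
        rw [sq_sub_sq, sqrt_mul (by linarith)]
    _ ≤ √y / (√y * √(y - t)) := by gcongr; linarith
    _ = 1 / √(y - t) := by field_simp

theorem setLIntegral_Ioi_comp_sub_right (f : ℝ → ENNReal) (t : ℝ) :
    ∫⁻ y in Ioi t, f (y - t) = ∫⁻ s in Ioi 0, f s := by
  have h := (measurePreserving_sub_right volume t).setLIntegral_comp_preimage_emb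
    (MeasurableEquiv.subRight t).measurableEmbedding f (Ioi 0)
  simpa only [preimage_sub_const_Ioi, zero_add] using h

theorem lintegral_div_sqrt_sq_sub_sq_le {g : ℝ → ℝ} {M : ℝ} (hM : 0 ≤ M)
    (hg : ∀ y, 0 < y → g y ≤ M * (√y * exp (-y))) {t : ℝ} (ht : 0 ≤ t) :
    ∫⁻ y in Ioi t, ENNReal.ofReal (g y / √(y ^ 2 - t ^ 2)) ≤
      ENNReal.ofReal M * ∫⁻ s in Ioi (0 : ℝ), ENNReal.ofReal (exp (-s) / √s) := by
  rw [← setLIntegral_Ioi_comp_sub_right _ t, ← lintegral_const_mul' _ _ ENNReal.ofReal_ne_top]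
  refine setLIntegral_mono' measurableSet_Ioi fun y hy => ?_
  rw [← ENNReal.ofReal_mul hM]
  refine ENNReal.ofReal_le_ofReal ?_
  calc g y / √(y ^ 2 - t ^ 2) ≤ M * (√y * exp (-y)) / √(y ^ 2 - t ^ 2) := by
        gcongr; exact hg y (ht.trans_lt hy)
    _ = M * (exp (-y) * (√y / √(y ^ 2 - t ^ 2))) := by ring
    _ ≤ M * (exp (-(y - t)) * (1 / √(y - t))) := by
        refine mul_le_mul_of_nonneg_left (mul_le_mul ?_ (sqrt_div_sqrt_sq_sub_sq_le ht hy)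
          (by positivity) (exp_nonneg _)) hM
        exact exp_le_exp.2 (by linarith)
    _ = M * (exp (-(y - t)) / √(y - t)) := by rw [mul_one_div]

theorem lintegral_mul_lintegral_div_sqrt_sq_sub_sq_lt_top {k g : ℝ → ℝ}
    (hk : IntegrableOn k (Ioi 0)) {M : ℝ} (hM : 0 ≤ M)
    (hg : ∀ y, 0 < y → g y ≤ M * (√y * exp (-y))) :
    ∫⁻ t in Ioi (0 : ℝ), ENNReal.ofReal |k t| *
      ∫⁻ y in Ioi t, ENNReal.ofReal (g y / √(y ^ 2 - t ^ 2)) < ⊤ := by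
  let B := ENNReal.ofReal M * ∫⁻ s in Ioi (0 : ℝ), ENNReal.ofReal (exp (-s) / √s)
  have hB : B < ⊤ :=
    ENNReal.mul_lt_top ENNReal.ofReal_lt_top integrableOn_exp_neg_div_sqrt.lintegral_lt_top
  calc ∫⁻ t in Ioi (0 : ℝ), ENNReal.ofReal |k t| *
        ∫⁻ y in Ioi t, ENNReal.ofReal (g y / √(y ^ 2 - t ^ 2))
      ≤ ∫⁻ t in Ioi (0 : ℝ), ENNReal.ofReal |k t| * B :=
        setLIntegral_mono' measurableSet_Ioi fun t ht => by
          gcongr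
          exact lintegral_div_sqrt_sq_sub_sq_le hM hg (le_of_lt ht)
    _ = (∫⁻ t in Ioi (0 : ℝ), ENNReal.ofReal |k t|) * B := lintegral_mul_const' _ _ hB.ne
    _ < ⊤ := ENNReal.mul_lt_top hk.abs.lintegral_lt_top hB

variable {E : Type*} [NormedAddCommGroup E] [NormedSpace ℝ E]

theorem integral_smul_integral_inv_sqrt_sq_sub_sq_swap [CompleteSpace E] {k : ℝ → ℝ} {F : ℝ → E}
    (hk : AEStronglyMeasurable k (volume.restrict (Ioi 0)))
    (hF : AEStronglyMeasurable F (volume.restrict (Ioi 0)))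
    (hfin : ∫⁻ t in Ioi (0 : ℝ), ENNReal.ofReal |k t| *
      ∫⁻ y in Ioi t, ENNReal.ofReal (‖F y‖ / √(y ^ 2 - t ^ 2)) < ⊤) :
    ∫ y in Ioi (0 : ℝ), (∫ t in (0 : ℝ)..y, k t / √(y ^ 2 - t ^ 2)) • F y =
      ∫ t in Ioi (0 : ℝ), k t • ∫ y in Ioi t, (√(y ^ 2 - t ^ 2))⁻¹ • F y := by
  let G (t y : ℝ) : E := k t • (√(y ^ 2 - t ^ 2))⁻¹ • F y
  have hG : AEStronglyMeasurable (uncurry G)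
      ((volume.restrict (Ioi 0)).prod (volume.restrict (Ioi 0))) := by
    have hsqrt : Measurable fun p : ℝ × ℝ => (√(p.2 ^ 2 - p.1 ^ 2))⁻¹ := by fun_prop
    exact hk.comp_fst.smul (hsqrt.aestronglyMeasurable.smul hF.comp_snd)
  have enorm_G (t y : ℝ) :
      ‖G t y‖ₑ = ENNReal.ofReal |k t| * ENNReal.ofReal (‖F y‖ / √(y ^ 2 - t ^ 2)) := by
    rw [← ENNReal.ofReal_mul (abs_nonneg _), ← ofReal_norm, norm_smul, norm_smul,
      norm_inv, norm_of_nonneg (sqrt_nonneg _), norm_eq_abs, div_eq_inv_mul]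
  have hG_fin : ∫⁻ t in Ioi (0 : ℝ), ∫⁻ y in Ioi t, ‖G t y‖ₑ < ⊤ := by
    simpa only [enorm_G, lintegral_const_mul' _ _ ENNReal.ofReal_ne_top] using hfin
  have integral_G_fst {y : ℝ} (hy : y ∈ Ioi 0) :
      ∫ t in Ioo 0 y, G t y = (∫ t in (0 : ℝ)..y, k t / √(y ^ 2 - t ^ 2)) • F y := by
    rw [intervalIntegral.integral_of_le (le_of_lt hy), integral_Ioc_eq_integral_Ioo,
      ← integral_smul_const]
    simp only [G, smul_smul, div_eq_mul_inv]
  calc ∫ y in Ioi (0 : ℝ), (∫ t in (0 : ℝ)..y, k t / √(y ^ 2 - t ^ 2)) • F y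
      = ∫ y in Ioi (0 : ℝ), ∫ t in Ioo 0 y, G t y :=
        setIntegral_congr_fun measurableSet_Ioi fun _ hy => (integral_G_fst hy).symm
    _ = ∫ t in Ioi (0 : ℝ), ∫ y in Ioi t, G t y :=
        (setIntegral_Ioi_setIntegral_Ioi_swap 0 hG hG_fin).symm
    _ = ∫ t in Ioi (0 : ℝ), k t • ∫ y in Ioi t, (√(y ^ 2 - t ^ 2))⁻¹ • F y := by
        simp only [G, integral_smul]

end AbelKernel

section BesselK

theorem one_add_sq_div_two_le_cosh (u : ℝ) : 1 + u ^ 2 / 2 ≤ cosh u := by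
  have hsinh : (u / 2) ^ 2 ≤ sinh (u / 2) ^ 2 := by
    rw [sq_le_sq, abs_sinh]
    exact self_le_sinh_iff.2 (abs_nonneg _)
  have hcosh : cosh u = 1 + 2 * sinh (u / 2) ^ 2 := by
    rw [← mul_div_cancel₀ u two_ne_zero, cosh_two_mul, cosh_sq']
    ring_nf
  linarith

theorem abs_besselKi_le (τ : ℝ) {x : ℝ} (hx : 0 < x) :
    |besselKi τ x| ≤ √(π / (2 * x)) * exp (-x) := by
  have hint : IntegrableOn (fun u => exp (-x) * exp (-(x / 2) * u ^ 2)) (Ioi 0) :=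
    ((integrable_exp_neg_mul_sq (half_pos hx)).const_mul _).integrableOn
  have hbound (u : ℝ) :
      ‖exp (-x * cosh u) * cos (τ * u)‖ ≤ exp (-x) * exp (-(x / 2) * u ^ 2) :=
    calc ‖exp (-x * cosh u) * cos (τ * u)‖ ≤ exp (-x * cosh u) := by
          rw [norm_mul, norm_of_nonneg (exp_nonneg _)]
          exact mul_le_of_le_one_right (exp_nonneg _) (abs_cos_le_one _)
      _ ≤ exp (-x) * exp (-(x / 2) * u ^ 2) := by
          rw [← exp_add, exp_le_exp]
          nlinarith [one_add_sq_div_two_le_cosh u]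
  calc |besselKi τ x| ≤ ∫ u in Ioi 0, exp (-x) * exp (-(x / 2) * u ^ 2) :=
        norm_integral_le_of_norm_le hint (ae_of_all _ hbound)
    _ = exp (-x) * (√(π / (x / 2)) / 2) := by rw [integral_const_mul, integral_gaussian_Ioi]
    _ = √(π / (2 * x)) * exp (-x) := by
        have hscale : π / (x / 2) = 2 ^ 2 * (π / (2 * x)) := by field_simp
        rw [hscale, sqrt_mul (by norm_num), sqrt_sq (by norm_num)]
        ring

theorem stronglyMeasurable_besselKi (τ : ℝ) : StronglyMeasurable (besselKi τ) := by
  have hcont : Continuous (uncurry fun x u : ℝ => exp (-x * cosh u) * cos (τ * u)) := by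
    unfold uncurry
    fun_prop
  exact hcont.stronglyMeasurable.integral_prod_right

theorem integrableOn_besselKi (τ : ℝ) : IntegrableOn (besselKi τ) (Ioi 0) := by
  refine Integrable.mono' (integrableOn_exp_neg_div_sqrt.const_mul √(π / 2))
    (stronglyMeasurable_besselKi τ).aestronglyMeasurable
    ((ae_restrict_iff' measurableSet_Ioi).2 (ae_of_all _ fun x hx => ?_))
  refine (abs_besselKi_le τ hx).trans_eq ?_
  rw [← div_div, sqrt_div' _ (le_of_lt hx)]
  ring

variable {E : Type*} [NormedAddCommGroup E] [NormedSpace ℝ E] {μ : Measure ℝ} {g : ℝ → E}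

theorem aestronglyMeasurable_integral_besselKi_smul [SFinite μ] (σ : ℝ) {ν : Measure ℝ}
    (hg : AEStronglyMeasurable g μ) :
    AEStronglyMeasurable (fun x => ∫ u, besselKi σ (x * cosh u) • g u ∂μ) ν := by
  have hK : StronglyMeasurable fun p : ℝ × ℝ => besselKi σ (p.1 * cosh p.2) :=
    (stronglyMeasurable_besselKi σ).comp_measurable (by fun_prop)
  exact (hK.aestronglyMeasurable.smul hg.comp_snd).integral_prod_right'

theorem norm_integral_besselKi_smul_le (σ : ℝ) (hg : Integrable g μ) {x : ℝ} (hx : 0 < x) :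
    ‖∫ u, besselKi σ (x * cosh u) • g u ∂μ‖ ≤
      √(π / (2 * x)) * exp (-x) * ∫ u, ‖g u‖ ∂μ := by
  rw [← integral_const_mul]
  refine norm_integral_le_of_norm_le (hg.norm.const_mul _) (ae_of_all _ fun u => ?_)
  have hxu : x ≤ x * cosh u := le_mul_of_one_le_right hx.le (one_le_cosh u)
  calc ‖besselKi σ (x * cosh u) • g u‖
      ≤ √(π / (2 * (x * cosh u))) * exp (-(x * cosh u)) * ‖g u‖ := by
        rw [norm_smul]
        gcongr
        exact abs_besselKi_le σ (hx.trans_le hxu)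
    _ ≤ √(π / (2 * x)) * exp (-x) * ‖g u‖ := by gcongr

theorem norm_smul_integral_besselKi_smul_le (σ : ℝ) (hg : Integrable g μ) {x : ℝ} (hx : 0 < x) :
    ‖(2 * x / π) • ∫ u, besselKi σ (x * cosh u) • g u ∂μ‖ ≤
      √(2 / π) * (∫ u, ‖g u‖ ∂μ) * (√x * exp (-x)) := by
  have hsqrt : 2 * x / π * √(π / (2 * x)) = √(2 / π) * √x := by
    rw [← inv_div (2 * x), sqrt_inv, ← div_eq_mul_inv, div_sqrt, ← sqrt_mul (by positivity)]
    ring_nf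
  calc ‖(2 * x / π) • ∫ u, besselKi σ (x * cosh u) • g u ∂μ‖
      ≤ 2 * x / π * (√(π / (2 * x)) * exp (-x) * ∫ u, ‖g u‖ ∂μ) := by
        rw [norm_smul, norm_of_nonneg (by positivity)]
        gcongr
        exact norm_integral_besselKi_smul_le σ hg hx
    _ = 2 * x / π * √(π / (2 * x)) * (exp (-x) * ∫ u, ‖g u‖ ∂μ) := by ring
    _ = √(2 / π) * (∫ u, ‖g u‖ ∂μ) * (√x * exp (-x)) := by rw [hsqrt]; ring

end BesselK

theorem intervalIntegrable_of_norm_sub_le {E : Type*} [NormedAddCommGroup E] {ψ : ℝ → E}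
    {C a b : ℝ} (hab : a ≤ b)
    (hlip : ∀ u ∈ Icc a b, ∀ v ∈ Icc a b, ‖ψ u - ψ v‖ ≤ C * |u - v|) :
    IntervalIntegrable ψ volume a b := by
  have hψ : LipschitzOnWith C.toNNReal ψ (Icc a b) :=
    .of_dist_le' (by simpa only [dist_eq_norm, norm_eq_abs] using hlip)
  exact hψ.continuousOn.intervalIntegrable_of_Icc hab

theorem lebedev_fubini_interchange_first_general (σ τ : ℝ) {a b : ℝ} {φ f : ℝ → ℂ}
    (hφ : IntervalIntegrable φ volume a b)
    (hf : ∀ x : ℝ, 0 < x → f x = ((2 * x / π : ℝ) : ℂ) *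
      ∫ u in a..b, ((besselKi σ (x * cosh u) : ℝ) : ℂ) * φ u * (cosh u : ℂ)) :
    (∫⁻ t in Ioi (0 : ℝ), ENNReal.ofReal |besselKi τ t| *
        ∫⁻ y in Ioi t, ENNReal.ofReal (‖f y‖ / √(y ^ 2 - t ^ 2)) < ⊤) ∧
      (∫ y in Ioi (0 : ℝ),
          ((∫ t in (0 : ℝ)..y, besselKi τ t / √(y ^ 2 - t ^ 2) : ℝ) : ℂ) * f y) =
        ∫ t in Ioi (0 : ℝ), ((besselKi τ t : ℝ) : ℂ) *
          ∫ y in Ioi t, f y / ((√(y ^ 2 - t ^ 2) : ℝ) : ℂ) := by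
  let orientation : ℝ := if a ≤ b then 1 else -1
  let g (u : ℝ) : ℂ := orientation • (φ u * (cosh u : ℂ))
  let I (x : ℝ) : ℂ := ∫ u in uIoc a b, besselKi σ (x * cosh u) • g u
  have cosh_cont : Continuous fun u : ℝ => (cosh u : ℂ) := by fun_prop
  have hg : IntegrableOn g (uIoc a b) :=
    (hφ.mul_continuousOn cosh_cont.continuousOn).def'.smul orientation
  have f_eq {x : ℝ} (hx : 0 < x) : f x = (2 * x / π) • I x := by
    rw [hf x hx, intervalIntegral.intervalIntegral_eq_integral_uIoc, ← integral_smul,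
      Complex.real_smul]
    refine congrArg _ (integral_congr_ae (ae_of_all _ fun u => ?_))
    simp only [g, orientation, Complex.real_smul]
    ring
  have f_meas : AEStronglyMeasurable f (volume.restrict (Ioi 0)) := by
    have hI : AEStronglyMeasurable I (volume.restrict (Ioi 0)) :=
      aestronglyMeasurable_integral_besselKi_smul σ hg.aestronglyMeasurable
    have hlin : Measurable fun x : ℝ => 2 * x / π := by fun_prop
    exact (hlin.aestronglyMeasurable.smul hI).congr
      ((ae_restrict_iff' measurableSet_Ioi).2 (ae_of_all _ fun x hx => (f_eq hx).symm))
  have f_bound (y : ℝ) (hy : 0 < y) :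
      ‖f y‖ ≤ √(2 / π) * (∫ u in uIoc a b, ‖g u‖) * (√y * exp (-y)) :=
    f_eq hy ▸ norm_smul_integral_besselKi_smul_le σ hg hy
  have hfin := lintegral_mul_lintegral_div_sqrt_sq_sub_sq_lt_top (integrableOn_besselKi τ)
    (by positivity) f_bound
  refine ⟨hfin, ?_⟩
  simpa only [Complex.real_smul, Complex.ofReal_inv, inv_mul_eq_div] using
    integral_smul_integral_inv_sqrt_sq_sub_sq_swap
      (integrableOn_besselKi τ).aestronglyMeasurable f_meas hfin

/-- Absolute convergence of the double integral and the interchange of the order of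
integration in (2.5). -/
theorem lebedev_fubini_interchange_first
    (C : ℝ) (hC : 0 < C) (ψ : ℝ → ℂ)
    (hper : ∀ u : ℝ, ψ (u + 2 * π) = ψ u)
    (hlip : ∀ u ∈ Set.Icc (-π) π, ∀ v ∈ Set.Icc (-π) π, ‖ψ u - ψ v‖ ≤ C * |u - v|)
    (φ : ℝ → ℂ) (hφ : ∀ u : ℝ, φ u = ψ u * Real.sinh u)
    (f : ℝ → ℂ)
    (hf : ∀ x : ℝ, 0 < x → f x = ((2 * x / π : ℝ) : ℂ) *
      ∫ u in (-π)..π, ((besselKi 0 (x * Real.cosh u) : ℝ) : ℂ) * φ u * (Real.cosh u : ℂ)) :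
    ∀ n : ℕ, 0 < n →
      (∫⁻ t in Set.Ioi (0 : ℝ), ENNReal.ofReal |besselKi n t| *
          ∫⁻ y in Set.Ioi t, ENNReal.ofReal (‖f y‖ / Real.sqrt (y ^ 2 - t ^ 2)) < ⊤) ∧
      (∫ y in Set.Ioi (0 : ℝ),
          ((∫ t in (0 : ℝ)..y, besselKi n t / Real.sqrt (y ^ 2 - t ^ 2) : ℝ) : ℂ) * f y) =
        ∫ t in Set.Ioi (0 : ℝ), ((besselKi n t : ℝ) : ℂ) *
          ∫ y in Set.Ioi t, f y / ((Real.sqrt (y ^ 2 - t ^ 2) : ℝ) : ℂ) := by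
  obtain rfl : φ = fun u => ψ u * Real.sinh u := funext hφ
  exact fun n _ => lebedev_fubini_interchange_first_general 0 n
    ((intervalIntegrable_of_norm_sub_le (by linarith [pi_pos]) hlip).mul_continuousOn
      (by fun_prop)) hf
end
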